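/- arXiv:1501.00903 — 3 statements merged into one kernel-verified Lean document; each statement's English description precedes it below -/
import Mathlib

section
/- For every n ≥ 1, the polynomial T_n(x) = Σ_{k=0}^{n} T_{n,k} x^k has n distinct negative real roots (i.e., T_n has exactly n roots, all real, negative, and pairwise distinct). -/
open Polynomial

def Tnk (m c : ℕ) : ℕ → ℕ → ℕ
  | 0, 0 => 1
  | 0, _ + 1 => 0
  | n + 1, 0 => c * Tnk m c n 0
  | n + 1, k + 1 => Tnk m c n k + (m * (k + 1) + c) * Tnk m c n (k + 1)

/-- The polynomial `T_n(x) = ∑_{k=0}^n T_{n,k} x^k`. -/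
noncomputable def Tpoly (m c n : ℕ) : Polynomial ℝ :=
  ∑ k ∈ Finset.range (n + 1), C (Tnk m c n k : ℝ) * X ^ k

/-!
Write `w(x) = exp(x/m) (-x)^(c/m)`. The recurrence reads `T_{n+1} = (x + c) T_n + m x T_n'`, so that
`(w T_n)' = w T_{n+1} / (m x)` on `x < 0`. The function `w T_n` vanishes at the negative roots of
`T_n`, at `0`, and in the limit `x → -∞`. Rolle's theorem applied to consecutive zeros, with `-∞`
counted as one of them, gives `T_{n+1}` at least one more negative root than `T_n`; the degree
excludes further roots.
-/

open Filter Topology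

section Rolle

variable {f f' : ℝ → ℝ} {b : ℝ}

-- The substitution `x = b + log t` turns this into Rolle's theorem on `(0, 1)`.
theorem exists_hasDerivAt_eq_zero_Iio {l : ℝ} (hbot : Tendsto f atBot (𝓝 l))
    (hb : Tendsto f (𝓝[<] b) (𝓝 l)) (hderiv : ∀ x < b, HasDerivAt f (f' x) x) :
    ∃ x < b, f' x = 0 := by
  have hlt : ∀ t ∈ Set.Ioo (0 : ℝ) 1, b + Real.log t < b := fun t ht ↦
    add_lt_of_neg_right b (Real.log_neg ht.1 ht.2)
  have hzero : Tendsto (fun t ↦ f (b + Real.log t)) (𝓝[>] 0) (𝓝 l) :=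
    hbot.comp (tendsto_atBot_add_const_left _ b Real.tendsto_log_nhdsGT_zero)
  have hone : Tendsto (fun t ↦ f (b + Real.log t)) (𝓝[<] 1) (𝓝 l) := by
    refine hb.comp (tendsto_nhdsWithin_iff.mpr ⟨?_, ?_⟩)
    · have hcont : ContinuousAt (fun t ↦ b + Real.log t) 1 :=
        continuousAt_const.add (Real.continuousAt_log one_ne_zero)
      simpa only [Real.log_one, add_zero] using hcont.tendsto.mono_left nhdsWithin_le_nhds
    · exact eventually_of_mem (Ioo_mem_nhdsLT one_pos) hlt
  have hcomp : ∀ t ∈ Set.Ioo (0 : ℝ) 1,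
      HasDerivAt (fun t ↦ f (b + Real.log t)) (f' (b + Real.log t) * t⁻¹) t := fun t ht ↦
    (hderiv _ (hlt t ht)).comp t ((Real.hasDerivAt_log ht.1.ne').const_add b)
  obtain ⟨t, ht, hft⟩ := exists_hasDerivAt_eq_zero' one_pos hzero hone hcomp
  exact ⟨b + Real.log t, hlt t ht, (mul_eq_zero.mp hft).resolve_right (inv_ne_zero ht.1.ne')⟩

theorem card_zeros_le_card_zeros_deriv_of_tendsto_atBot {s t : Finset ℝ}
    (hcont : ContinuousOn f (Set.Iic b)) (hderiv : ∀ x < b, HasDerivAt f (f' x) x)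
    (hbot : Tendsto f atBot (𝓝 0)) (hs : ∀ x ∈ s, x ≤ b ∧ f x = 0)
    (ht : ∀ x < b, f' x = 0 → x ∈ t) : s.card ≤ t.card := by
  obtain rfl | hne := s.eq_empty_or_nonempty
  · simp
  obtain ⟨ha, hfa⟩ := hs _ (s.min'_mem hne)
  obtain ⟨z₀, hz₀, hf'z₀⟩ : ∃ z < s.min' hne, f' z = 0 := by
    refine exists_hasDerivAt_eq_zero_Iio hbot ?_ fun x hx ↦ hderiv x (hx.trans_le ha)
    rw [← hfa]
    exact (hcont _ ha).mono fun x hx ↦ (le_of_lt hx).trans ha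
  have hbetween : s.card ≤ (t.erase z₀).card + 1 := by
    refine Finset.card_le_of_interleaved fun x hx y hy hxy _ ↦ ?_
    obtain ⟨hyb, hfy⟩ := hs y hy
    obtain ⟨z, ⟨hxz, hzy⟩, hf'z⟩ := exists_hasDerivAt_eq_zero hxy
      (hcont.mono fun u hu ↦ hu.2.trans hyb) ((hs x hx).2.trans hfy.symm)
      fun u hu ↦ hderiv u (hu.2.trans_le hyb)
    have hz₀z : z₀ < z := hz₀.trans ((s.min'_le x hx).trans_lt hxz)
    exact ⟨z, Finset.mem_erase.mpr ⟨hz₀z.ne', ht z (hzy.trans_le hyb) hf'z⟩, hxz, hzy⟩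
  rwa [Finset.card_erase_add_one (ht z₀ (hz₀.trans_le ha) hf'z₀)] at hbetween

end Rolle

section DowlingRaise

variable {R : Type*} [Semiring R] (m c : R)

/-- The operator `p ↦ (x + c) p + m x p'`, which sends `T_n` to `T_{n+1}`. -/
noncomputable def dowlingRaise (p : R[X]) : R[X] :=
  (X + C c) * p + C m * (X * derivative p)

theorem degree_dowlingRaise [Nontrivial R] (p : R[X]) :
    (dowlingRaise m c p).degree = p.degree + 1 := by
  obtain rfl | hp := eq_or_ne p 0
  · simp [dowlingRaise]
  have hmul : ((X + C c) * p).degree = p.degree + 1 := by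
    rw [(monic_X_add_C c).degree_mul_comm, (monic_X_add_C c).degree_mul, degree_X_add_C]
  have hlt : (C m * (X * derivative p)).degree < ((X + C c) * p).degree :=
    calc (C m * (X * derivative p)).degree
        ≤ (X * derivative p).degree := by rw [← smul_eq_C_mul]; exact degree_smul_le _ _
      _ = (derivative p).degree + 1 := by rw [X_mul, degree_mul_X]
      _ < p.degree + 1 := WithBot.add_lt_add_right WithBot.one_ne_bot (degree_derivative_lt hp)
      _ = ((X + C c) * p).degree := hmul.symm
  rw [dowlingRaise, degree_add_eq_left_of_degree_lt hlt, hmul]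

theorem dowlingRaise_ne_zero [Nontrivial R] {p : R[X]} (hp : p ≠ 0) :
    dowlingRaise m c p ≠ 0 := by
  rw [← degree_ne_bot, degree_dowlingRaise]
  simpa using hp

end DowlingRaise

section DowlingWeight

/-- The integrating factor of `dowlingRaise m c` on the negative half-line: up to a factor
`m x`, differentiating `dowlingWeight m c * p` amounts to applying `dowlingRaise m c` to `p`. -/
noncomputable def dowlingWeight (m c x : ℝ) : ℝ :=
  Real.exp (x / m) * (-x) ^ (c / m)

variable {m c x : ℝ}

theorem dowlingWeight_pos (hx : x < 0) : 0 < dowlingWeight m c x :=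
  mul_pos (Real.exp_pos _) (Real.rpow_pos_of_pos (neg_pos.mpr hx) _)

theorem dowlingWeight_zero (hm : m ≠ 0) (hc : c ≠ 0) : dowlingWeight m c 0 = 0 := by
  simp [dowlingWeight, Real.zero_rpow (div_ne_zero hc hm)]

theorem continuous_dowlingWeight (hmc : 0 ≤ c / m) : Continuous (dowlingWeight m c) :=
  (Real.continuous_exp.comp (continuous_id.div_const m)).mul
    (continuous_neg.rpow_const fun _ ↦ Or.inr hmc)

theorem hasDerivAt_dowlingWeight (hm : m ≠ 0) (hx : x < 0) :
    HasDerivAt (dowlingWeight m c) (dowlingWeight m c x * ((x + c) / (m * x))) x := by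
  have hexp : HasDerivAt (fun x ↦ Real.exp (x / m)) (Real.exp (x / m) * (1 / m)) x :=
    ((hasDerivAt_id x).div_const m).exp
  have hpow := (hasDerivAt_neg x).rpow_const (p := c / m) (Or.inl (neg_ne_zero.mpr hx.ne))
  refine (hexp.mul hpow).congr_deriv ?_
  rw [dowlingWeight, Real.rpow_sub_one (neg_ne_zero.mpr hx.ne)]
  have hx₀ : x ≠ 0 := hx.ne
  field_simp

theorem hasDerivAt_dowlingWeight_mul_eval (p : ℝ[X]) (hm : m ≠ 0) (hx : x < 0) :
    HasDerivAt (fun x ↦ dowlingWeight m c x * p.eval x)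
      (dowlingWeight m c x / (m * x) * (dowlingRaise m c p).eval x) x := by
  refine ((hasDerivAt_dowlingWeight hm hx).mul (p.hasDerivAt x)).congr_deriv ?_
  simp only [dowlingRaise, eval_add, eval_mul, eval_X, eval_C]
  have hx₀ : x ≠ 0 := hx.ne
  field_simp

theorem tendsto_dowlingWeight_mul_eval_atBot (p : ℝ[X]) (hm : 0 < m) :
    Tendsto (fun x ↦ dowlingWeight m c x * p.eval x) atBot (𝓝 0) := by
  induction p using Polynomial.induction_on' with
  | add p q hp hq => simpa only [eval_add, mul_add, add_zero] using hp.add hq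
  | monomial k a =>
    have hdecay : Tendsto (fun x : ℝ ↦ (-x) ^ (c / m + k) * Real.exp (-m⁻¹ * -x)) atBot (𝓝 0) :=
      (tendsto_rpow_mul_exp_neg_mul_atTop_nhds_zero (c / m + k) m⁻¹ (inv_pos.mpr hm)).comp
        tendsto_neg_atBot_atTop
    rw [← mul_zero (a * (-1) ^ k)]
    refine (hdecay.const_mul (a * (-1) ^ k)).congr' ?_
    filter_upwards [eventually_lt_atBot 0] with x hx
    have hsign : (-1) ^ k * (-x) ^ k = x ^ k := by rw [← mul_pow, neg_one_mul, neg_neg]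
    rw [Real.rpow_add_natCast (neg_ne_zero.mpr hx.ne), neg_mul_neg, inv_mul_eq_div, eval_monomial,
      dowlingWeight, ← hsign]
    ring

end DowlingWeight

section NegRoots

/-- The finite set of negative roots of a real polynomial, without multiplicity. It is empty for
the zero polynomial, by the convention on `Polynomial.roots`. -/
noncomputable def negRoots (p : ℝ[X]) : Finset ℝ :=
  p.roots.toFinset.filter (· < 0)

theorem mem_negRoots {p : ℝ[X]} (hp : p ≠ 0) {x : ℝ} :
    x ∈ negRoots p ↔ p.eval x = 0 ∧ x < 0 := by
  simp [negRoots, hp]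

theorem card_negRoots_lt_card_negRoots_dowlingRaise {m c : ℝ} (hm : 0 < m) (hc : 0 < c)
    {p : ℝ[X]} (hp : p ≠ 0) : (negRoots p).card < (negRoots (dowlingRaise m c p)).card := by
  have hzero : 0 ∉ negRoots p := fun h ↦ lt_irrefl 0 ((mem_negRoots hp).mp h).2
  rw [← Nat.add_one_le_iff, ← Finset.card_insert_of_notMem hzero]
  refine card_zeros_le_card_zeros_deriv_of_tendsto_atBot
    (f := fun x ↦ dowlingWeight m c x * p.eval x) (b := 0)
    ((continuous_dowlingWeight (div_pos hc hm).le).mul p.continuous).continuousOn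
    (fun x hx ↦ hasDerivAt_dowlingWeight_mul_eval p hm.ne' hx)
    (tendsto_dowlingWeight_mul_eval_atBot p hm) ?_ ?_
  · intro x hx
    obtain rfl | hx := Finset.mem_insert.mp hx
    · exact ⟨le_rfl, mul_eq_zero_of_left (dowlingWeight_zero hm.ne' hc.ne') _⟩
    · obtain ⟨hpx, hneg⟩ := (mem_negRoots hp).mp hx
      exact ⟨hneg.le, mul_eq_zero_of_right _ hpx⟩
  · intro x hx hderiv
    have hfactor : dowlingWeight m c x / (m * x) ≠ 0 :=
      div_ne_zero (dowlingWeight_pos hx).ne' (mul_ne_zero hm.ne' hx.ne)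
    exact (mem_negRoots (dowlingRaise_ne_zero m c hp)).mpr
      ⟨(mul_eq_zero.mp hderiv).resolve_left hfactor, hx⟩

end NegRoots

section Tpoly

variable (m c : ℕ)

theorem Tnk_eq_zero_of_lt {n k : ℕ} (h : n < k) : Tnk m c n k = 0 := by
  induction n generalizing k with
  | zero => obtain ⟨k, rfl⟩ := Nat.exists_eq_add_one.mpr h; rw [Tnk]
  | succ n ih =>
    obtain ⟨k, rfl⟩ := Nat.exists_eq_add_one.mpr (n.succ_pos.trans h)
    rw [Tnk, ih (by omega), ih (by omega), mul_zero, add_zero]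

theorem coeff_Tpoly (n k : ℕ) : (Tpoly m c n).coeff k = Tnk m c n k := by
  simp only [Tpoly, finsetSum_coeff, coeff_C_mul_X_pow, Finset.sum_ite_eq, Finset.mem_range]
  split_ifs with h
  · rfl
  · rw [Tnk_eq_zero_of_lt m c (by omega), Nat.cast_zero]

theorem Tpoly_zero : Tpoly m c 0 = 1 := by
  simp [Tpoly, Tnk]

theorem Tpoly_succ (n : ℕ) : Tpoly m c (n + 1) = dowlingRaise (m : ℝ) c (Tpoly m c n) := by
  ext k
  rw [dowlingRaise, add_mul, coeff_add, coeff_add, coeff_C_mul, coeff_C_mul]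
  cases k with
  | zero => simp [coeff_Tpoly, Tnk]
  | succ k =>
    rw [coeff_X_mul, coeff_X_mul, coeff_derivative]
    simp only [coeff_Tpoly, Tnk]
    push_cast
    ring

theorem degree_Tpoly (n : ℕ) : (Tpoly m c n).degree = n := by
  induction n with
  | zero => rw [Tpoly_zero, degree_one, Nat.cast_zero]
  | succ n ih => rw [Tpoly_succ, degree_dowlingRaise, ih, Nat.cast_succ]

theorem Tpoly_ne_zero (n : ℕ) : Tpoly m c n ≠ 0 :=
  degree_ne_bot.mp (by simp [degree_Tpoly])

variable {m c}

theorem le_card_negRoots_Tpoly (hm : 0 < m) (hc : 0 < c) (n : ℕ) :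
    n ≤ (negRoots (Tpoly m c n)).card := by
  induction n with
  | zero => exact Nat.zero_le _
  | succ n ih =>
    rw [Tpoly_succ]
    exact ih.trans_lt (card_negRoots_lt_card_negRoots_dowlingRaise (Nat.cast_pos.mpr hm)
      (Nat.cast_pos.mpr hc) (Tpoly_ne_zero m c n))

end Tpoly

/-- For `n ≥ 1`, the polynomial `T_n(x)` has `n` distinct negative real roots:
its degree is `n`, it has `n` pairwise distinct real roots, and every real root
is negative. -/
theorem stmt_3 (m c : ℕ) (hm : 0 < m) (hc : 0 < c) (n : ℕ) (hn : 1 ≤ n) :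
    (Tpoly m c n).degree = n ∧
    (Tpoly m c n).roots.toFinset.card = n ∧
    ∀ x ∈ (Tpoly m c n).roots, x < 0 := by
  have hcard_le : (Tpoly m c n).roots.toFinset.card ≤ n :=
    (Multiset.toFinset_card_le _).trans <|
      (card_roots' _).trans_eq (natDegree_eq_of_degree_eq_some (degree_Tpoly m c n))
  have hle_card := le_card_negRoots_Tpoly hm hc n
  have hsub : negRoots (Tpoly m c n) ⊆ (Tpoly m c n).roots.toFinset := Finset.filter_subset _ _
  have heq : negRoots (Tpoly m c n) = (Tpoly m c n).roots.toFinset :=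
    Finset.eq_of_subset_of_card_le hsub (hcard_le.trans hle_card)
  refine ⟨degree_Tpoly m c n, hcard_le.antisymm (heq ▸ hle_card), fun x hx ↦ ?_⟩
  rw [← Multiset.mem_toFinset, ← heq] at hx
  exact ((mem_negRoots (Tpoly_ne_zero m c n)).mp hx).2
end

section
/- Let r = r(n) be the unique positive real solution of r·(e^{m·r} + c) = n. Then as n → ∞, T_n = (1/√(m·r + 1))·exp(m·n·r − n + n/(m·r) + 2·c·r − (1+c)/m)·(1 + O(n^{−1/2}·log^{7/2} n)); that is, the ratio of T_n to the stated main term equals 1 + O(n^{−1/2}·log^{7/2} n). -/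
open Filter

def Ttot (m c n : ℕ) : ℕ := ∑ k ∈ Finset.range (n + 1), Tnk m c n k

/-!
The exponential generating function of the row sums is `F z = exp (c z + (e^{mz} - 1) / m)`, so
Cauchy's formula writes `T_n` as an integral of `F` over the circle of radius `r`. The equation
`r (e^{mr} + c) = n` makes `θ = 0` a saddle point: the exponent of the normalized integrand has no
linear term there, and its quadratic term is `-B θ² / 2` with `B = n + m r² e^{mr}`.

Comparing the integrand with `exp (-B θ² / 2)` needs no cut-off depending on `n`. The third
derivative of the exponent is `O(r² n)`, and both functions are at most `exp (-κ n θ²)` where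
`r θ² ≤ 1` and at most `exp (-κ n θ² / r)` elsewhere on the circle, so the difference is bounded by
Gaussian moments. The relative error is `O(r³ / √n)`, and `m r ≤ log n` turns it into
`O(log³ n / √n)`. What remains is Stirling's formula for `n!` and the estimates
`n log (1 + c e^{-mr}) = c r + O(r² / n)` and `n (m r + 1) / B = 1 + O(r² / n)`.
-/

section Analysis

open MeasureTheory Real Topology Asymptotics

lemma norm_le_mul_abs_pow_succ_of_hasDerivAt {E : Type*} [NormedAddCommGroup E] [NormedSpace ℝ E]
    {f f' : ℝ → E} {L : ℝ} {k : ℕ} (hf : ∀ t, HasDerivAt f (f' t) t) (h0 : f 0 = 0) (hL : 0 ≤ L)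
    (hf' : ∀ t, ‖f' t‖ ≤ L * |t| ^ k) (t : ℝ) : ‖f t‖ ≤ L * |t| ^ (k + 1) := by
  have hbound : ∀ x ∈ Set.Icc (-|t|) |t|, ‖f' x‖ ≤ L * |t| ^ k := fun x hx ↦
    (hf' x).trans (by have := abs_le.mpr hx; gcongr)
  have hmvt := (convex_Icc (-|t|) |t|).norm_image_sub_le_of_norm_hasDerivWithin_le
    (fun x _ ↦ (hf x).hasDerivWithinAt) hbound (x := 0) (y := t) (by simp)
    ⟨neg_abs_le t, le_abs_self t⟩
  simpa only [h0, sub_zero, norm_eq_abs, pow_succ, mul_assoc] using hmvt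

lemma norm_le_mul_abs_pow_three_of_hasDerivAt {E : Type*} [NormedAddCommGroup E] [NormedSpace ℝ E]
    {f f₁ f₂ f₃ : ℝ → E} {L : ℝ} (hf : ∀ t, HasDerivAt f (f₁ t) t)
    (hf₁ : ∀ t, HasDerivAt f₁ (f₂ t) t) (hf₂ : ∀ t, HasDerivAt f₂ (f₃ t) t)
    (h0 : f 0 = 0) (h1 : f₁ 0 = 0) (h2 : f₂ 0 = 0) (hL : ∀ t, ‖f₃ t‖ ≤ L) (t : ℝ) :
    ‖f t‖ ≤ L * |t| ^ 3 := by
  have hL0 : 0 ≤ L := (norm_nonneg _).trans (hL 0)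
  have b₂ := norm_le_mul_abs_pow_succ_of_hasDerivAt (k := 0) hf₂ h2 hL0 (by simpa using hL)
  have b₁ := norm_le_mul_abs_pow_succ_of_hasDerivAt hf₁ h1 hL0 b₂
  exact norm_le_mul_abs_pow_succ_of_hasDerivAt hf h0 hL0 b₁ t

lemma norm_cexp_sub_cexp_le {a b : ℂ} {M : ℝ} (ha : a.re ≤ M) (hb : b.re ≤ M) :
    ‖Complex.exp a - Complex.exp b‖ ≤ exp M * ‖a - b‖ := by
  refine (convex_halfSpace_re_le M).norm_image_sub_le_of_norm_hasDerivWithin_le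
    (fun z _ ↦ (Complex.hasDerivAt_exp z).hasDerivWithinAt) (fun z hz ↦ ?_) hb ha
  rw [Complex.norm_exp]
  exact exp_le_exp.mpr hz

lemma integrable_abs_pow_mul_exp_neg_mul_sq {a : ℝ} (ha : 0 < a) (k : ℕ) :
    Integrable (fun x : ℝ ↦ |x| ^ k * exp (-a * x ^ 2)) := by
  have hk : (-1 : ℝ) < k := neg_one_lt_zero.trans_le k.cast_nonneg
  simpa [rpow_natCast] using (integrable_rpow_mul_exp_neg_mul_sq ha hk).norm

lemma integral_abs_pow_odd_mul_exp_neg_mul_sq {a : ℝ} (ha : 0 < a) (j : ℕ) :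
    ∫ x : ℝ, |x| ^ (2 * j + 1) * exp (-a * x ^ 2) = j.factorial / a ^ (j + 1) := by
  have hexp : ((2 * j + 1 : ℕ) + 1 : ℝ) / 2 = (j + 1 : ℕ) := by push_cast; ring
  have hk : (-1 : ℝ) < (2 * j + 1 : ℕ) := neg_one_lt_zero.trans_le (Nat.cast_nonneg _)
  have heven := integral_comp_abs (f := fun x : ℝ ↦ x ^ (2 * j + 1) * exp (-a * x ^ 2))
  simp only [sq_abs] at heven
  have hgamma := integral_rpow_mul_exp_neg_mul_rpow two_pos hk ha
  simp only [rpow_natCast, rpow_ofNat, neg_div, hexp] at hgamma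
  rw [heven, hgamma, rpow_neg ha.le, rpow_natCast, Nat.cast_succ j, Gamma_nat_eq_factorial]
  ring

lemma iteratedDeriv_eq_smul_integral_circleMap {E : Type*} [NormedAddCommGroup E]
    [NormedSpace ℂ E] [CompleteSpace E] {f : ℂ → E} {z₀ : ℂ} {R : ℝ} (hR : 0 < R)
    (hf : DiffContOnCl ℂ f (Metric.ball z₀ R)) (n : ℕ) :
    iteratedDeriv n f z₀ = (n.factorial / (2 * π) : ℂ) •
      ∫ θ in (-π)..π, ((circleMap 0 R θ) ^ n)⁻¹ • f (circleMap z₀ R θ) := by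
  have hperiod : Function.Periodic
      (fun θ ↦ ((circleMap 0 R θ) ^ n)⁻¹ • f (circleMap z₀ R θ)) (2 * π) := fun θ ↦ by
    simp only [periodic_circleMap 0 R θ, periodic_circleMap z₀ R θ]
  have hshift : ∫ θ in (-π)..π, ((circleMap 0 R θ) ^ n)⁻¹ • f (circleMap z₀ R θ) =
      ∫ θ in 0..(2 * π), ((circleMap 0 R θ) ^ n)⁻¹ • f (circleMap z₀ R θ) := by
    convert! hperiod.intervalIntegral_add_eq (-π) 0 using 2 <;> ring
  have hcircle : (∮ z in C(z₀, R), (1 / (z - z₀) ^ (n + 1)) • f z) =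
      Complex.I • ∫ θ in 0..(2 * π), ((circleMap 0 R θ) ^ n)⁻¹ • f (circleMap z₀ R θ) := by
    rw [circleIntegral, ← intervalIntegral.integral_smul]
    congr 1 with θ
    have hz : circleMap 0 R θ ≠ 0 := circleMap_ne_center hR.ne'
    rw [deriv_circleMap, circleMap_sub_center, smul_smul, smul_smul]
    congr 1
    field_simp
    ring
  have hcauchy := hf.circleIntegral_one_div_sub_center_pow_smul hR n
  rw [hcircle] at hcauchy
  have hne : (2 * π * Complex.I / n.factorial : ℂ) ≠ 0 := by simp [pi_ne_zero, n.factorial_ne_zero]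
  rw [(eq_inv_smul_iff₀ hne).mpr hcauchy.symm, hshift, smul_smul]
  congr 1
  field_simp

lemma log_stirlingSeq_le {n : ℕ} (hn : n ≠ 0) :
    log (Stirling.stirlingSeq n) ≤ log √π + 1 / (12 * n) := by
  let h : ℕ → ℝ := fun k ↦ log (Stirling.stirlingSeq (k + 1)) - 1 / (12 * (k + 1))
  have hmono : Monotone h := monotone_nat_of_le_succ fun k ↦ by
    have hstep := Stirling.log_stirlingSeq_sdiff_le (k + 1)
    have htelescope : 1 / (12 * ((k + 1 : ℕ) : ℝ) * ((k + 1 : ℕ) + 1)) =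
        1 / (12 * (k + 1)) - 1 / (12 * ((k + 1 : ℕ) + 1)) := by
      push_cast; field_simp; ring
    rw [htelescope] at hstep
    simp only [h]
    linarith
  have hlog : Tendsto (fun k ↦ log (Stirling.stirlingSeq (k + 1))) atTop (𝓝 (log √π)) :=
    (Stirling.tendsto_stirlingSeq_sqrt_pi.log (sqrt_ne_zero'.mpr pi_pos)).comp
      (tendsto_add_atTop_nat 1)
  have hinv : Tendsto (fun k : ℕ ↦ 1 / (12 * ((k : ℝ) + 1))) atTop (𝓝 0) := by
    simpa [div_eq_mul_inv, mul_comm] using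
      (tendsto_one_div_add_atTop_nhds_zero_nat (𝕜 := ℝ)).mul_const 12⁻¹
  have hle := hmono.ge_of_tendsto (hlog.sub hinv) (n - 1)
  obtain ⟨k, rfl⟩ := Nat.exists_eq_succ_of_ne_zero hn
  simp only [h, Nat.succ_eq_add_one, Nat.add_sub_cancel, sub_zero] at hle
  push_cast
  linarith

lemma isBigO_exp_sub_one {α : Type*} {l : Filter α} {f g : α → ℝ} (hfg : f =O[l] g)
    (hg : Tendsto g l (𝓝 0)) : (fun x ↦ exp (f x) - 1) =O[l] g := by
  have hexp := (hasDerivAt_exp 0).isBigO_sub.comp_tendsto (hfg.trans_tendsto hg)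
  refine IsBigO.trans ?_ hfg
  simpa only [Function.comp_def, exp_zero, sub_zero] using hexp

lemma isBigO_mul_sub_one {α : Type*} {l : Filter α} {a b g : α → ℝ}
    (hg : g =O[l] fun _ ↦ (1 : ℝ)) (ha : (fun x ↦ a x - 1) =O[l] g)
    (hb : (fun x ↦ b x - 1) =O[l] g) : (fun x ↦ a x * b x - 1) =O[l] g := by
  have hab : (fun x ↦ (a x - 1) * (b x - 1)) =O[l] g := by
    simpa only [mul_one] using ha.mul (hb.trans hg)
  exact ((hab.add ha).add hb).congr_left fun x ↦ by ring

lemma isBigO_stirlingSeq_div_sqrt_pi_sub_one :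
    (fun n ↦ Stirling.stirlingSeq n / √π - 1) =O[atTop] fun n : ℕ ↦ 1 / (n : ℝ) := by
  have hsqrt : 0 < √π := sqrt_pos.mpr pi_pos
  have hpos : ∀ {n : ℕ}, n ≠ 0 → 0 < Stirling.stirlingSeq n := fun hn ↦
    hsqrt.trans_le (Stirling.sqrt_pi_le_stirlingSeq hn)
  have hlog : (fun n ↦ log (Stirling.stirlingSeq n) - log √π) =O[atTop]
      fun n : ℕ ↦ 1 / (n : ℝ) := by
    refine IsBigO.of_bound (1 / 12) ?_
    filter_upwards [eventually_ne_atTop 0] with n hn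
    have hlower := log_le_log hsqrt (Stirling.sqrt_pi_le_stirlingSeq hn)
    have hupper := log_stirlingSeq_le hn
    rw [norm_of_nonneg (sub_nonneg.mpr hlower), norm_of_nonneg (by positivity),
      one_div_mul_one_div]
    linarith
  refine (isBigO_exp_sub_one hlog tendsto_one_div_atTop_nhds_zero_nat).congr' ?_ .rfl
  filter_upwards [eventually_ne_atTop 0] with n hn
  rw [exp_sub, exp_log (hpos hn), exp_log hsqrt]

lemma one_le_log_of_three_le {x : ℝ} (hx : 3 ≤ x) : 1 ≤ log x := by
  rw [le_log_iff_exp_le (by linarith)]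
  exact exp_one_lt_three.le.trans hx

lemma isBigO_log_pow_three_div_sqrt :
    (fun n : ℕ ↦ log n ^ 3 / √n) =O[atTop] fun n : ℕ ↦ log n ^ ((7 : ℝ) / 2) / √n := by
  refine IsBigO.of_bound 1 ?_
  filter_upwards [eventually_ge_atTop 3] with n hn
  have hn' : (3 : ℝ) ≤ n := by exact_mod_cast hn
  rw [norm_of_nonneg (by positivity), norm_of_nonneg (by positivity), one_mul]
  gcongr
  rw [← rpow_ofNat]
  exact rpow_le_rpow_of_exponent_le (one_le_log_of_three_le hn') (by norm_num)

lemma isBigO_one_div_log_pow_three_div_sqrt :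
    (fun n : ℕ ↦ 1 / (n : ℝ)) =O[atTop] fun n : ℕ ↦ log n ^ 3 / √n := by
  refine IsBigO.of_bound 1 ?_
  filter_upwards [eventually_ge_atTop 3] with n hn
  have hn' : (3 : ℝ) ≤ n := by exact_mod_cast hn
  rw [norm_of_nonneg (by positivity), norm_of_nonneg (by positivity), one_mul]
  gcongr ?_ / ?_
  · exact one_le_pow₀ (one_le_log_of_three_le hn')
  · exact sqrt_le_self_iff.mpr (.inr (by linarith))

lemma tendsto_log_pow_div_sqrt_atTop (k : ℕ) :
    Tendsto (fun n : ℕ ↦ log n ^ k / √n) atTop (𝓝 0) := by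
  have h := (isLittleO_log_rpow_rpow_atTop (k : ℝ) one_half_pos).tendsto_div_nhds_zero
  simp only [rpow_natCast, ← sqrt_eq_rpow] at h
  exact h.comp tendsto_natCast_atTop_atTop

end Analysis

section Whitney

/-- The (generalized) Whitney numbers of the second kind with parameters `m` and `c`, over an
arbitrary semiring; over `ℕ` this is the triangle `Tnk m c`. -/
def whitneyNumber {R : Type*} [Semiring R] (m c : R) : ℕ → ℕ → R
  | 0, 0 => 1
  | 0, _ + 1 => 0
  | n + 1, 0 => c * whitneyNumber m c n 0
  | n + 1, k + 1 => whitneyNumber m c n k + (m * (k + 1) + c) * whitneyNumber m c n (k + 1)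

/-- The (generalized) Dowling numbers, the row sums of the triangle of Whitney numbers. -/
def dowlingNumber {R : Type*} [Semiring R] (m c : R) (n : ℕ) : R :=
  ∑ k ∈ Finset.range (n + 1), whitneyNumber m c n k

variable {R S : Type*}

lemma map_whitneyNumber [Semiring R] [Semiring S] (f : R →+* S) (m c : R) :
    ∀ n k : ℕ, f (whitneyNumber m c n k) = whitneyNumber (f m) (f c) n k
  | 0, 0 => by simp only [whitneyNumber, map_one]
  | 0, _ + 1 => by simp only [whitneyNumber, map_zero]
  | n + 1, 0 => by simp only [whitneyNumber, map_mul, map_whitneyNumber f m c n]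
  | n + 1, k + 1 => by
    simp only [whitneyNumber, map_add, map_mul, map_natCast, map_one, map_whitneyNumber f m c n]

lemma map_dowlingNumber [Semiring R] [Semiring S] (f : R →+* S) (m c : R) (n : ℕ) :
    f (dowlingNumber m c n) = dowlingNumber (f m) (f c) n := by
  simp only [dowlingNumber, map_sum, map_whitneyNumber]

lemma Tnk_eq_whitneyNumber (m c : ℕ) : ∀ n k : ℕ, Tnk m c n k = whitneyNumber m c n k
  | 0, 0 => rfl
  | 0, _ + 1 => rfl
  | n + 1, 0 => by rw [Tnk, whitneyNumber, Tnk_eq_whitneyNumber m c n]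
  | n + 1, k + 1 => by
    simp only [Tnk, whitneyNumber, Tnk_eq_whitneyNumber m c n, Nat.cast_id]

lemma cast_Ttot [Semiring R] (m c n : ℕ) : (Ttot m c n : R) = dowlingNumber (m : R) (c : R) n := by
  have hTtot : Ttot m c n = dowlingNumber m c n := by
    simp only [Ttot, dowlingNumber, Tnk_eq_whitneyNumber]
  rw [hTtot]
  exact map_dowlingNumber (Nat.castRingHom R) m c n

lemma whitneyNumber_eq_zero_of_lt [Semiring R] (m c : R) :
    ∀ {n k : ℕ}, n < k → whitneyNumber m c n k = 0
  | 0, _ + 1, _ => rfl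
  | n + 1, k + 1, h => by
    rw [whitneyNumber, whitneyNumber_eq_zero_of_lt m c (by lia : n < k),
      whitneyNumber_eq_zero_of_lt m c (by lia : n < k + 1), mul_zero, add_zero]

lemma sum_whitneyNumber_succ_mul_pow [CommSemiring R] (m c x : R) (n : ℕ) :
    ∑ k ∈ Finset.range (n + 2), whitneyNumber m c (n + 1) k * x ^ k =
      ∑ k ∈ Finset.range (n + 1), whitneyNumber m c n k * ((m * k + c) * x ^ k + x ^ (k + 1)) := by
  have hshift : ∑ k ∈ Finset.range (n + 1), whitneyNumber m c n k * ((m * k + c) * x ^ k) =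
      ∑ k ∈ Finset.range (n + 1),
        whitneyNumber m c n (k + 1) * ((m * (k + 1 : ℕ) + c) * x ^ (k + 1)) +
          whitneyNumber m c n 0 * ((m * (0 : ℕ) + c) * x ^ 0) := by
    rw [← Finset.sum_range_succ' fun k ↦ whitneyNumber m c n k * ((m * k + c) * x ^ k),
      Finset.sum_range_succ _ (n + 1),
      whitneyNumber_eq_zero_of_lt m c n.lt_succ_self, zero_mul, add_zero]
  simp only [mul_add (whitneyNumber m c n _), Finset.sum_add_distrib, hshift]
  rw [Finset.sum_range_succ', add_right_comm, ← Finset.sum_add_distrib]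
  congr 1
  · refine Finset.sum_congr rfl fun k _ ↦ ?_
    rw [whitneyNumber]
    push_cast
    ring
  · rw [whitneyNumber]
    push_cast
    ring

end Whitney

section GeneratingFunction

/-- The logarithm of the exponential generating function of the Dowling numbers. -/
noncomputable def dowlingLogEGF (m c z : ℂ) : ℂ :=
  c * z + (Complex.exp (m * z) - 1) / m

/-- The exponential generating function of the Dowling numbers. -/
noncomputable def dowlingEGF (m c z : ℂ) : ℂ :=
  Complex.exp (dowlingLogEGF m c z)

variable {m : ℂ}

lemma hasDerivAt_cexp_const_mul (m z : ℂ) :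
    HasDerivAt (fun z ↦ Complex.exp (m * z)) (m * Complex.exp (m * z)) z := by
  simpa only [mul_one, mul_comm] using (hasDerivAt_const_mul m).cexp

lemma hasDerivAt_dowlingLogEGF (hm : m ≠ 0) (c z : ℂ) :
    HasDerivAt (dowlingLogEGF m c) (c + Complex.exp (m * z)) z := by
  refine ((hasDerivAt_const_mul c).add
    (((hasDerivAt_cexp_const_mul m z).sub_const 1).div_const m)).congr_deriv ?_
  rw [mul_div_cancel_left₀ _ hm]

lemma hasDerivAt_cexp_pow_mul_dowlingEGF (hm : m ≠ 0) (c z : ℂ) (k : ℕ) :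
    HasDerivAt (fun z ↦ Complex.exp (m * z) ^ k * dowlingEGF m c z)
      (((m * k + c) * Complex.exp (m * z) ^ k + Complex.exp (m * z) ^ (k + 1)) *
        dowlingEGF m c z) z := by
  have hpow : HasDerivAt (fun z ↦ Complex.exp (m * z) ^ k)
      (m * k * Complex.exp (m * z) ^ k) z := by
    have hexp (z : ℂ) : Complex.exp (m * k * z) = Complex.exp (m * z) ^ k := by
      rw [← Complex.exp_nat_mul]
      ring_nf
    simpa only [hexp] using hasDerivAt_cexp_const_mul (m * k) z
  refine (hpow.mul (hasDerivAt_dowlingLogEGF hm c z).cexp).congr_deriv ?_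
  rw [← dowlingEGF]
  ring

lemma iteratedDeriv_dowlingEGF (hm : m ≠ 0) (c : ℂ) (n : ℕ) :
    iteratedDeriv n (dowlingEGF m c) = fun z ↦
      (∑ k ∈ Finset.range (n + 1), whitneyNumber m c n k * Complex.exp (m * z) ^ k) *
        dowlingEGF m c z := by
  induction n with
  | zero => ext z; simp [whitneyNumber]
  | succ n ih =>
    ext z
    have hderiv := HasDerivAt.fun_sum (u := Finset.range (n + 1)) fun k _ ↦
      (hasDerivAt_cexp_pow_mul_dowlingEGF hm c z k).const_mul (whitneyNumber m c n k)
    simp only [← mul_assoc (whitneyNumber m c n _), ← Finset.sum_mul] at hderiv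
    rw [iteratedDeriv_succ, ih, hderiv.deriv, sum_whitneyNumber_succ_mul_pow]

lemma iteratedDeriv_dowlingEGF_zero (hm : m ≠ 0) (c : ℂ) (n : ℕ) :
    iteratedDeriv n (dowlingEGF m c) 0 = dowlingNumber m c n := by
  simp [iteratedDeriv_dowlingEGF hm, dowlingEGF, dowlingLogEGF, dowlingNumber]

end GeneratingFunction

section SaddlePoint

open MeasureTheory Real

/-- The exponent of the integrand in Cauchy's formula for the `n`-th Dowling number on the circle
of radius `r`, normalized to vanish at `θ = 0`. -/
noncomputable def saddleExponent (m c r n θ : ℝ) : ℂ :=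
  dowlingLogEGF m c (circleMap 0 r θ) - dowlingLogEGF m c r - n * θ * Complex.I

/-- The value of `-(d/dθ)² saddleExponent m c r n θ` at `θ = 0` when `r` is the saddle point, that
is, when `r * (exp (m * r) + c) = n`. -/
noncomputable def saddleCurvature (m r n : ℝ) : ℝ :=
  n + m * r ^ 2 * exp (m * r)

/-- The `n`-th Dowling number divided by the trivial bound for Cauchy's integral on the circle of
radius `r`, times `2 * π`. -/
noncomputable def normalizedDowling (m c r : ℝ) (n : ℕ) : ℝ :=
  2 * π * dowlingNumber m c n * r ^ n / (n.factorial * exp (c * r + (exp (m * r) - 1) / m))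

variable {m c r n : ℝ}

lemma continuous_saddleExponent (m c r n : ℝ) : Continuous (saddleExponent m c r n) := by
  unfold saddleExponent dowlingLogEGF
  fun_prop

lemma integral_cexp_saddleExponent (hm : m ≠ 0) (hr : 0 < r) (n : ℕ) :
    ∫ θ in (-π)..π, Complex.exp (saddleExponent m c r n θ) = normalizedDowling m c r n := by
  have hm' : (m : ℂ) ≠ 0 := by exact_mod_cast hm
  have hr' : (r : ℂ) ≠ 0 := by exact_mod_cast hr.ne'
  have hdiff : Differentiable ℂ (dowlingEGF m c) := fun z ↦
    (hasDerivAt_dowlingLogEGF hm' c z).cexp.differentiableAt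
  have hcauchy := iteratedDeriv_eq_smul_integral_circleMap hr hdiff.diffContOnCl n (z₀ := 0)
  have hintegrand (θ : ℝ) : (circleMap 0 r θ ^ n)⁻¹ • dowlingEGF m c (circleMap 0 r θ) =
      Complex.exp (dowlingLogEGF m c r) / r ^ n * Complex.exp (saddleExponent m c r n θ) := by
    have hpow : circleMap 0 r θ ^ n = r ^ n * Complex.exp (n * θ * Complex.I) := by
      rw [circleMap_zero, mul_pow, ← Complex.exp_nat_mul, mul_assoc]
    rw [hpow, dowlingEGF, saddleExponent, Complex.exp_sub, Complex.exp_sub, Complex.ofReal_natCast,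
      smul_eq_mul]
    field_simp
  have hegf : Complex.exp (dowlingLogEGF m c r) = exp (c * r + (exp (m * r) - 1) / m) := by
    push_cast [dowlingLogEGF]
    rfl
  have hdowling : (dowlingNumber (m : ℂ) (c : ℂ) n) = (dowlingNumber m c n : ℝ) :=
    (map_dowlingNumber Complex.ofRealHom m c n).symm
  simp only [hintegrand, intervalIntegral.integral_const_mul, hegf,
    iteratedDeriv_dowlingEGF_zero hm', hdowling, smul_eq_mul] at hcauchy
  rw [normalizedDowling]
  push_cast [hcauchy]
  have hπ : (π : ℂ) ≠ 0 := by exact_mod_cast pi_ne_zero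
  have hn : (n.factorial : ℂ) ≠ 0 := by exact_mod_cast n.factorial_ne_zero
  field_simp

lemma norm_cexp_mul_circleMap (m r θ : ℝ) :
    ‖Complex.exp (m * circleMap 0 r θ)‖ = exp (m * r * cos θ) := by
  rw [Complex.norm_exp, Complex.re_ofReal_mul, circleMap_zero, Complex.re_ofReal_mul,
    Complex.exp_ofReal_mul_I_re, mul_assoc]

lemma hasDerivAt_cexp_mul_circleMap (m r θ : ℝ) :
    HasDerivAt (fun θ : ℝ ↦ Complex.exp (m * circleMap 0 r θ))
      (Complex.exp (m * circleMap 0 r θ) * (m * (circleMap 0 r θ * Complex.I))) θ :=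
  ((hasDerivAt_circleMap 0 r θ).const_mul (m : ℂ)).cexp

lemma hasDerivAt_saddleExponent (hm : m ≠ 0) (c r n θ : ℝ) :
    HasDerivAt (saddleExponent m c r n)
      (Complex.I * (circleMap 0 r θ * (c + Complex.exp (m * circleMap 0 r θ)) - n)) θ := by
  have hm' : (m : ℂ) ≠ 0 := by exact_mod_cast hm
  refine ((((hasDerivAt_dowlingLogEGF hm' c _).comp θ (hasDerivAt_circleMap 0 r θ)).sub_const _).sub
    (((hasDerivAt_id θ).ofReal_comp.const_mul (n : ℂ)).mul_const Complex.I)).congr_deriv ?_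
  push_cast
  ring

lemma hasDerivAt_saddleExponent_deriv (m c r n θ : ℝ) :
    HasDerivAt (fun θ : ℝ ↦
        Complex.I * (circleMap 0 r θ * (c + Complex.exp (m * circleMap 0 r θ)) - n))
      (-(circleMap 0 r θ * (c + Complex.exp (m * circleMap 0 r θ)) +
        m * circleMap 0 r θ ^ 2 * Complex.exp (m * circleMap 0 r θ))) θ := by
  refine ((((hasDerivAt_circleMap 0 r θ).mul
    ((hasDerivAt_cexp_mul_circleMap m r θ).const_add (c : ℂ))).sub_const _).const_mul
      Complex.I).congr_deriv ?_
  linear_combination (circleMap 0 r θ * (c + Complex.exp (m * circleMap 0 r θ)) +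
    m * circleMap 0 r θ ^ 2 * Complex.exp (m * circleMap 0 r θ)) * Complex.I_sq

lemma hasDerivAt_saddleExponent_deriv_two (m c r θ : ℝ) :
    HasDerivAt (fun θ : ℝ ↦ -(circleMap 0 r θ * (c + Complex.exp (m * circleMap 0 r θ)) +
        m * circleMap 0 r θ ^ 2 * Complex.exp (m * circleMap 0 r θ)))
      (-Complex.I * (circleMap 0 r θ * (c + Complex.exp (m * circleMap 0 r θ)) +
        3 * m * circleMap 0 r θ ^ 2 * Complex.exp (m * circleMap 0 r θ) +
        m ^ 2 * circleMap 0 r θ ^ 3 * Complex.exp (m * circleMap 0 r θ))) θ := by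
  have hz := hasDerivAt_circleMap 0 r θ
  have he := hasDerivAt_cexp_mul_circleMap m r θ
  refine ((hz.mul (he.const_add (c : ℂ))).add
    (((hz.pow 2).const_mul (m : ℂ)).mul he)).neg.congr_deriv ?_
  simp only [Pi.pow_apply]
  push_cast
  ring

lemma norm_saddleExponent_deriv_three_le (hm : 0 ≤ m) (hc : 0 ≤ c) (hr : 0 ≤ r)
    (hn : r * (exp (m * r) + c) = n) (θ : ℝ) :
    ‖-Complex.I * (circleMap 0 r θ * (c + Complex.exp (m * circleMap 0 r θ)) +
        3 * m * circleMap 0 r θ ^ 2 * Complex.exp (m * circleMap 0 r θ) +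
        m ^ 2 * circleMap 0 r θ ^ 3 * Complex.exp (m * circleMap 0 r θ))‖ ≤
      (1 + 3 * (m * r) + (m * r) ^ 2) * n := by
  have hz : ‖circleMap 0 r θ‖ = r := by rw [norm_circleMap_zero, abs_of_nonneg hr]
  have he : ‖Complex.exp (m * circleMap 0 r θ)‖ ≤ exp (m * r) := by
    simpa only [norm_mul, hz, Complex.norm_of_nonneg hm] using
      Complex.norm_exp_le_exp_norm (m * circleMap 0 r θ)
  have hrn : r * exp (m * r) ≤ n := by
    rw [← hn]
    exact mul_le_mul_of_nonneg_left (le_add_of_nonneg_right hc) hr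
  rw [norm_mul, norm_neg, Complex.norm_I, one_mul]
  calc _ ≤ r * (c + exp (m * r)) + 3 * m * r ^ 2 * exp (m * r) + m ^ 2 * r ^ 3 * exp (m * r) := by
        refine norm_add₃_le.trans (add_le_add_three ?_ ?_ ?_)
        · rw [norm_mul, hz]
          grw [norm_add_le, he, Complex.norm_of_nonneg hc]
        · simp only [norm_mul, norm_pow, hz, Complex.norm_of_nonneg hm, Complex.norm_ofNat]
          gcongr
        · simp only [norm_mul, norm_pow, hz, Complex.norm_of_nonneg hm]
          gcongr
    _ = n + (3 * (m * r) + (m * r) ^ 2) * (r * exp (m * r)) := by rw [← hn]; ring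
    _ ≤ n + (3 * (m * r) + (m * r) ^ 2) * n := by gcongr
    _ = (1 + 3 * (m * r) + (m * r) ^ 2) * n := by ring

lemma norm_saddleExponent_sub_le (hm : 0 < m) (hc : 0 ≤ c) (hr : 0 ≤ r)
    (hn : r * (exp (m * r) + c) = n) (θ : ℝ) :
    ‖saddleExponent m c r n θ - (-(saddleCurvature m r n / 2) * θ ^ 2 : ℝ)‖ ≤
      (1 + 3 * (m * r) + (m * r) ^ 2) * n * |θ| ^ 3 := by
  have hnC : (n : ℂ) = r * (Complex.exp (m * r) + c) := by exact_mod_cast hn.symm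
  have hquad (t : ℝ) : HasDerivAt (fun t : ℝ ↦ (((-(saddleCurvature m r n / 2) * t ^ 2 : ℝ)) : ℂ))
      ((-saddleCurvature m r n * t : ℝ) : ℂ) t :=
    (((hasDerivAt_pow 2 t).const_mul _).congr_deriv (by ring)).ofReal_comp
  have hlin (t : ℝ) : HasDerivAt (fun t : ℝ ↦ ((-saddleCurvature m r n * t : ℝ) : ℂ))
      ((-saddleCurvature m r n : ℝ) : ℂ) t :=
    (hasDerivAt_const_mul _).ofReal_comp
  refine norm_le_mul_abs_pow_three_of_hasDerivAt
    (fun t ↦ (hasDerivAt_saddleExponent hm.ne' c r n t).sub (hquad t))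
    (fun t ↦ (hasDerivAt_saddleExponent_deriv m c r n t).sub (hlin t))
    (fun t ↦ (hasDerivAt_saddleExponent_deriv_two m c r t).sub_const _) ?_ ?_ ?_
    (norm_saddleExponent_deriv_three_le hm.le hc hr hn) θ
  · simp [saddleExponent, circleMap]
  · simp [circleMap, hnC, add_comm]
  · simp only [circleMap, saddleCurvature, hnC, Complex.ofReal_zero, zero_mul, Complex.exp_zero,
      mul_one, zero_add, Complex.ofReal_neg, Complex.ofReal_add, Complex.ofReal_mul,
      Complex.ofReal_pow, Complex.ofReal_exp]
    ring

lemma saddleExponent_re_le (hm : 0 < m) (hc : 0 ≤ c) (hr : 0 ≤ r) (n θ : ℝ) :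
    (saddleExponent m c r n θ).re ≤
      -(r * exp (m * r) * (1 - cos θ) / (1 + m * r * (1 - cos θ))) := by
  have hcos : 0 ≤ 1 - cos θ := sub_nonneg.mpr (cos_le_one θ)
  set x := m * r * (1 - cos θ) with hx
  have hx0 : 0 ≤ x := by positivity
  have hexp : exp (m * r * cos θ) ≤ exp (m * r) * (1 / (1 + x)) := by
    have hsplit : exp (m * r * cos θ) = exp (m * r) * (1 / exp x) := by
      rw [one_div, ← exp_neg, ← exp_add, hx]
      ring_nf
    rw [hsplit]
    gcongr
    linarith [add_one_le_exp x]
  have hre : (saddleExponent m c r n θ).re = -(c * r * (1 - cos θ)) +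
      ((Complex.exp (m * circleMap 0 r θ)).re - exp (m * r)) / m := by
    have hreal : Complex.exp (m * r) = exp (m * r) := by push_cast; rfl
    simp only [saddleExponent, dowlingLogEGF, circleMap, hreal, zero_add, Complex.sub_re,
      Complex.add_re, Complex.mul_re, Complex.mul_im, Complex.ofReal_re, Complex.ofReal_im,
      Complex.exp_ofReal_mul_I_re, Complex.exp_ofReal_mul_I_im, Complex.div_ofReal_re,
      Complex.one_re, Complex.I_re, Complex.I_im, zero_mul, mul_zero, mul_one, add_zero, sub_zero,
      sub_self]
    ring
  calc (saddleExponent m c r n θ).re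
      ≤ 0 + (exp (m * r) * (1 / (1 + x)) - exp (m * r)) / m := by
        rw [hre]
        gcongr
        · exact neg_nonpos.mpr (by positivity)
        · exact (Complex.re_le_norm _).trans ((norm_cexp_mul_circleMap m r θ).trans_le hexp)
    _ = -(r * exp (m * r) * (1 - cos θ) / (1 + x)) := by
        field_simp
        rw [hx]
        ring

/-- A constant `κ` such that the integrand `exp (saddleExponent m c r n θ)` is bounded by
`exp (-κ * n * θ ^ 2)` for `r * θ ^ 2 ≤ 1` and by `exp (-κ * n / r * θ ^ 2)` on the whole circle. -/
noncomputable def saddleDecayRate (m c : ℝ) : ℝ :=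
  2 / (π ^ 2 * (1 + c) * (1 + 2 * m))

lemma saddleDecayRate_pos (hm : 0 < m) (hc : 0 ≤ c) : 0 < saddleDecayRate m c := by
  unfold saddleDecayRate
  positivity

lemma saddleDecayRate_le_half (hm : 0 < m) (hc : 0 ≤ c) : saddleDecayRate m c ≤ 1 / 2 := by
  have hπ : 2 ^ 2 ≤ π ^ 2 := by
    gcongr
    exact two_le_pi
  rw [saddleDecayRate, div_le_div_iff₀ (by positivity) two_pos]
  calc (2 : ℝ) * 2 = 2 ^ 2 * 1 * 1 := by norm_num
    _ ≤ 1 * (π ^ 2 * (1 + c) * (1 + 2 * m)) := by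
      rw [one_mul]
      gcongr <;> linarith

lemma saddleExponent_re_le_neg_mul_sq (hm : 0 < m) (hc : 0 ≤ c) (hr : 0 ≤ r)
    (hn : r * (exp (m * r) + c) = n) {θ y : ℝ} (hθ : |θ| ≤ π) (hy : 0 < y)
    (hcos : 1 + m * r * (1 - cos θ) ≤ (1 + 2 * m) * y) :
    (saddleExponent m c r n θ).re ≤ -(saddleDecayRate m c * n / y) * θ ^ 2 := by
  have hcos0 : 0 ≤ 1 - cos θ := sub_nonneg.mpr (cos_le_one θ)
  have hjordan : 2 / π ^ 2 * θ ^ 2 ≤ 1 - cos θ := by linarith [cos_le_one_sub_mul_cos_sq hθ]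
  have hnle : n / (1 + c) ≤ r * exp (m * r) := by
    rw [div_le_iff₀ (by positivity), ← hn, mul_assoc]
    gcongr
    nlinarith [one_le_exp (show 0 ≤ m * r by positivity)]
  refine (saddleExponent_re_le hm hc hr n θ).trans ?_
  rw [neg_mul, neg_le_neg_iff]
  calc saddleDecayRate m c * n / y * θ ^ 2
      = n / (1 + c) * (2 / π ^ 2 * θ ^ 2) / ((1 + 2 * m) * y) := by
        rw [saddleDecayRate]
        field_simp
    _ ≤ r * exp (m * r) * (1 - cos θ) / (1 + m * r * (1 - cos θ)) := by gcongr

lemma saddleExponent_re_le_of_mul_sq_le_one (hm : 0 < m) (hc : 0 ≤ c) (hr : 0 ≤ r)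
    (hn : r * (exp (m * r) + c) = n) {θ : ℝ} (hθ : |θ| ≤ π) (hrθ : r * θ ^ 2 ≤ 1) :
    (saddleExponent m c r n θ).re ≤ -(saddleDecayRate m c * n) * θ ^ 2 := by
  rw [← div_one (saddleDecayRate m c * n)]
  refine saddleExponent_re_le_neg_mul_sq hm hc hr hn hθ one_pos ?_
  calc 1 + m * r * (1 - cos θ) ≤ 1 + m * r * (θ ^ 2 / 2) := by
        gcongr
        linarith [one_sub_sq_div_two_le_cos (x := θ)]
    _ = 1 + m / 2 * (r * θ ^ 2) := by ring
    _ ≤ 1 + m / 2 * 1 := by gcongr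
    _ ≤ (1 + 2 * m) * 1 := by linarith

lemma saddleExponent_re_le_of_abs_le_pi (hm : 0 < m) (hc : 0 ≤ c) (hr : 1 ≤ r)
    (hn : r * (exp (m * r) + c) = n) {θ : ℝ} (hθ : |θ| ≤ π) :
    (saddleExponent m c r n θ).re ≤ -(saddleDecayRate m c * n / r) * θ ^ 2 := by
  refine saddleExponent_re_le_neg_mul_sq hm hc (by linarith) hn hθ (by linarith) ?_
  calc 1 + m * r * (1 - cos θ) ≤ r + m * r * 2 := by
        gcongr
        linarith [neg_one_le_cos θ]
    _ = (1 + 2 * m) * r := by ring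

lemma neg_saddleCurvature_mul_sq_le (hm : 0 < m) (hc : 0 ≤ c) (hn : 0 ≤ n) (r θ : ℝ) :
    -(saddleCurvature m r n / 2) * θ ^ 2 ≤ -(saddleDecayRate m c * n) * θ ^ 2 := by
  rw [neg_mul, neg_mul, neg_le_neg_iff]
  gcongr
  calc saddleDecayRate m c * n ≤ 1 / 2 * n := by
        gcongr
        exact saddleDecayRate_le_half hm hc
    _ ≤ saddleCurvature m r n / 2 := by
        rw [saddleCurvature]
        linarith [show 0 ≤ m * r ^ 2 * exp (m * r) by positivity]

lemma norm_cexp_saddleExponent_sub_le (hm : 0 < m) (hc : 0 ≤ c) (hr : 1 ≤ r)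
    (hn : r * (exp (m * r) + c) = n) {θ M : ℝ} (hre : (saddleExponent m c r n θ).re ≤ M)
    (hquad : -(saddleCurvature m r n / 2) * θ ^ 2 ≤ M) :
    ‖Complex.exp (saddleExponent m c r n θ) -
        (exp (-(saddleCurvature m r n / 2) * θ ^ 2) : ℝ)‖ ≤
      (1 + 3 * m + m ^ 2) * r ^ 2 * n * (|θ| ^ 3 * exp M) := by
  have hn0 : 0 ≤ n := by
    rw [← hn]
    positivity
  rw [Complex.ofReal_exp]
  calc _ ≤ exp M * ‖saddleExponent m c r n θ - (-(saddleCurvature m r n / 2) * θ ^ 2 : ℝ)‖ :=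
        norm_cexp_sub_cexp_le hre (by rwa [Complex.ofReal_re])
    _ ≤ exp M * ((1 + 3 * (m * r) + (m * r) ^ 2) * n * |θ| ^ 3) := by
        gcongr
        exact norm_saddleExponent_sub_le hm hc (by linarith) hn θ
    _ ≤ exp M * ((1 * r ^ 2 + 3 * (m * r ^ 2) + (m * r) ^ 2) * n * |θ| ^ 3) := by
        have hr2 : 1 ≤ r ^ 2 := one_le_pow₀ hr
        have hrr2 : r ≤ r ^ 2 := le_self_pow₀ hr two_ne_zero
        gcongr
        rwa [one_mul]
    _ = (1 + 3 * m + m ^ 2) * r ^ 2 * n * (|θ| ^ 3 * exp M) := by ring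

/-- An integrable bound for the distance between the integrand `exp (saddleExponent m c r n θ)`,
extended by zero outside `(-π, π]`, and the Gaussian that approximates it. -/
noncomputable def saddleMajorant (m c r n θ : ℝ) : ℝ :=
  (1 + 3 * m + m ^ 2) * r ^ 2 * n * (|θ| ^ 3 * exp (-(saddleDecayRate m c * n) * θ ^ 2) +
    r * (|θ| ^ 5 * exp (-(saddleDecayRate m c * n / r) * θ ^ 2)))

lemma norm_cexp_saddleExponent_sub_le_saddleMajorant (hm : 0 < m) (hc : 0 ≤ c) (hr : 1 ≤ r)
    (hn : r * (exp (m * r) + c) = n) {θ : ℝ} (hθ : |θ| ≤ π) :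
    ‖Complex.exp (saddleExponent m c r n θ) -
        (exp (-(saddleCurvature m r n / 2) * θ ^ 2) : ℝ)‖ ≤ saddleMajorant m c r n θ := by
  have hn0 : 0 ≤ n := by
    rw [← hn]
    positivity
  have hκ := saddleDecayRate_pos hm hc
  have hquad := neg_saddleCurvature_mul_sq_le hm hc hn0 r θ
  rw [saddleMajorant]
  rcases le_total (r * θ ^ 2) 1 with hnear | hfar
  · refine (norm_cexp_saddleExponent_sub_le hm hc hr hn
      (saddleExponent_re_le_of_mul_sq_le_one hm hc (by linarith) hn hθ hnear) hquad).trans ?_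
    gcongr
    exact le_add_of_nonneg_right (by positivity)
  · have hquad' : -(saddleCurvature m r n / 2) * θ ^ 2 ≤
        -(saddleDecayRate m c * n / r) * θ ^ 2 := by
      refine hquad.trans ?_
      gcongr
      exact div_le_self (by positivity) hr
    refine (norm_cexp_saddleExponent_sub_le hm hc hr hn
      (saddleExponent_re_le_of_abs_le_pi hm hc hr hn hθ) hquad').trans ?_
    gcongr
    calc |θ| ^ 3 * exp (-(saddleDecayRate m c * n / r) * θ ^ 2)
        ≤ r * |θ| ^ 2 * (|θ| ^ 3 * exp (-(saddleDecayRate m c * n / r) * θ ^ 2)) :=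
          le_mul_of_one_le_left (by positivity) (by rwa [sq_abs])
      _ = r * (|θ| ^ 5 * exp (-(saddleDecayRate m c * n / r) * θ ^ 2)) := by ring
      _ ≤ _ := le_add_of_nonneg_left (by positivity)

lemma exp_neg_saddleCurvature_le_saddleMajorant (hm : 0 < m) (hc : 0 ≤ c) (hr : 1 ≤ r)
    (hn : 1 ≤ n) {θ : ℝ} (hθ : 1 ≤ |θ|) :
    exp (-(saddleCurvature m r n / 2) * θ ^ 2) ≤ saddleMajorant m c r n θ := by
  have hone : 1 ≤ (1 + 3 * m + m ^ 2) * r ^ 2 * n :=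
    one_le_mul_of_one_le_of_one_le (one_le_mul_of_one_le_of_one_le
      (by linarith [show 0 ≤ 3 * m + m ^ 2 by positivity]) (one_le_pow₀ hr)) hn
  calc exp (-(saddleCurvature m r n / 2) * θ ^ 2)
      ≤ exp (-(saddleDecayRate m c * n) * θ ^ 2) :=
        exp_le_exp.mpr (neg_saddleCurvature_mul_sq_le hm hc (by linarith) r θ)
    _ ≤ |θ| ^ 3 * exp (-(saddleDecayRate m c * n) * θ ^ 2) :=
        le_mul_of_one_le_left (exp_nonneg _) (one_le_pow₀ hθ)
    _ ≤ |θ| ^ 3 * exp (-(saddleDecayRate m c * n) * θ ^ 2) +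
          r * (|θ| ^ 5 * exp (-(saddleDecayRate m c * n / r) * θ ^ 2)) :=
        le_add_of_nonneg_right (by positivity)
    _ ≤ saddleMajorant m c r n θ := le_mul_of_one_le_left (by positivity) hone

lemma one_le_of_mul_exp_add_eq (hm : 0 ≤ m) (hc : 0 ≤ c) (hr : 1 ≤ r)
    (hn : r * (exp (m * r) + c) = n) : 1 ≤ n := by
  rw [← hn]
  exact one_le_mul_of_one_le_of_one_le hr
    (le_add_of_le_of_nonneg (one_le_exp (by positivity)) hc)

lemma norm_indicator_cexp_saddleExponent_sub_le (hm : 0 < m) (hc : 0 ≤ c) (hr : 1 ≤ r)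
    (hn : r * (exp (m * r) + c) = n) (θ : ℝ) :
    ‖(Set.Ioc (-π) π).indicator (fun θ ↦ Complex.exp (saddleExponent m c r n θ)) θ -
        (exp (-(saddleCurvature m r n / 2) * θ ^ 2) : ℝ)‖ ≤ saddleMajorant m c r n θ := by
  by_cases hθ : θ ∈ Set.Ioc (-π) π
  · rw [Set.indicator_of_mem hθ]
    exact norm_cexp_saddleExponent_sub_le_saddleMajorant hm hc hr hn
      (abs_le.mpr ⟨hθ.1.le, hθ.2⟩)
  · rw [Set.indicator_of_notMem hθ, zero_sub, norm_neg, Complex.norm_of_nonneg (exp_nonneg _)]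
    have hθ1 : 1 ≤ |θ| := by
      by_contra! hlt
      have := abs_lt.mp hlt
      exact hθ ⟨by linarith [two_le_pi], by linarith [two_le_pi]⟩
    exact exp_neg_saddleCurvature_le_saddleMajorant hm hc hr
      (one_le_of_mul_exp_add_eq hm.le hc hr hn) hθ1

lemma integrable_saddleMajorant (hm : 0 < m) (hc : 0 ≤ c) (hr : 0 < r) (hn : 0 < n) :
    Integrable (saddleMajorant m c r n) := by
  have hκ := saddleDecayRate_pos hm hc
  exact ((integrable_abs_pow_mul_exp_neg_mul_sq (by positivity) 3).add
    ((integrable_abs_pow_mul_exp_neg_mul_sq (by positivity) 5).const_mul r)).const_mul _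

lemma integral_saddleMajorant (hm : 0 < m) (hc : 0 ≤ c) (hr : 0 < r) (hn : 0 < n) :
    ∫ θ, saddleMajorant m c r n θ =
      (1 + 3 * m + m ^ 2) * (1 / saddleDecayRate m c ^ 2 +
        2 * (r ^ 4 / n) / saddleDecayRate m c ^ 3) * (r ^ 2 / n) := by
  have hκ := saddleDecayRate_pos hm hc
  have hnear : 0 < saddleDecayRate m c * n := by positivity
  have hfar : 0 < saddleDecayRate m c * n / r := by positivity
  simp only [saddleMajorant]
  rw [integral_const_mul, integral_add (integrable_abs_pow_mul_exp_neg_mul_sq hnear 3)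
    ((integrable_abs_pow_mul_exp_neg_mul_sq hfar 5).const_mul r), integral_const_mul,
    integral_abs_pow_odd_mul_exp_neg_mul_sq hnear 1,
    integral_abs_pow_odd_mul_exp_neg_mul_sq hfar 2]
  norm_num only [Nat.factorial]
  field_simp

lemma abs_normalizedDowling_sub_le {n : ℕ} (hm : 0 < m) (hc : 0 ≤ c) (hr : 1 ≤ r)
    (hn : r * (exp (m * r) + c) = n) :
    |normalizedDowling m c r n - √(π / (saddleCurvature m r n / 2))| ≤
      ∫ θ, saddleMajorant m c r n θ := by
  have hn1 : (1 : ℝ) ≤ n := one_le_of_mul_exp_add_eq hm.le hc hr hn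
  have hB : 0 < saddleCurvature m r n / 2 := by
    unfold saddleCurvature
    positivity
  have hexp : Integrable ((Set.Ioc (-π) π).indicator fun θ ↦
      Complex.exp (saddleExponent m c r n θ)) := by
    rw [integrable_indicator_iff measurableSet_Ioc]
    exact (continuous_saddleExponent m c r n).cexp.integrableOn_Icc.mono_set
      Set.Ioc_subset_Icc_self
  have hgauss : Integrable fun θ : ℝ ↦
      ((exp (-(saddleCurvature m r n / 2) * θ ^ 2) : ℝ) : ℂ) :=
    (integrable_exp_neg_mul_sq hB).ofReal
  have hbound := norm_integral_le_of_norm_le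
    (integrable_saddleMajorant hm hc (by linarith) (by linarith))
    (.of_forall (norm_indicator_cexp_saddleExponent_sub_le hm hc hr hn))
  rwa [integral_sub hexp hgauss, integral_indicator measurableSet_Ioc,
    ← intervalIntegral.integral_of_le (by linarith [pi_pos]),
    integral_cexp_saddleExponent hm.ne' (by linarith), integral_complex_ofReal, integral_gaussian,
    ← Complex.ofReal_sub, Complex.norm_real, norm_eq_abs] at hbound

end SaddlePoint

section Asymptotics

open Real Topology Asymptotics

section Pointwise

variable {m c r : ℝ} {n : ℕ}

lemma exp_mul_le_of_mul_exp_add_eq (hc : 0 ≤ c) (hr : 1 ≤ r)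
    (hn : r * (exp (m * r) + c) = n) : exp (m * r) ≤ n := by
  rw [← hn]
  exact (le_add_of_nonneg_right hc).trans (le_mul_of_one_le_left (by positivity) hr)

lemma pow_le_of_mul_exp_add_eq (hm : 0 < m) (hc : 0 ≤ c) (hr : 1 ≤ r)
    (hn : r * (exp (m * r) + c) = n) (k : ℕ) : r ^ k ≤ k.factorial / m ^ k * n := by
  have hexp := (pow_div_factorial_le_exp (m * r) (by positivity) k).trans
    (exp_mul_le_of_mul_exp_add_eq hc hr hn)
  rw [div_le_iff₀ (by positivity), mul_pow] at hexp
  rw [div_mul_eq_mul_div, le_div_iff₀ (by positivity)]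
  linarith

lemma sqrt_saddleCurvature_div_le (hm : 0 ≤ m) (hc : 0 ≤ c) (hr : 1 ≤ r)
    (hn : r * (exp (m * r) + c) = n) :
    √(saddleCurvature m r n / (2 * π)) ≤ (1 + m) * r * √n := by
  have hrexp : r * exp (m * r) ≤ n := by
    rw [← hn]
    gcongr
    exact le_add_of_nonneg_right hc
  rw [sqrt_le_left (by positivity), mul_pow, sq_sqrt n.cast_nonneg]
  calc saddleCurvature m r n / (2 * π) ≤ saddleCurvature m r n :=
        div_le_self (by unfold saddleCurvature; positivity) (by linarith [two_le_pi])
    _ = n + m * r * (r * exp (m * r)) := by rw [saddleCurvature]; ring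
    _ ≤ n + m * r * n := by gcongr
    _ = (1 * 1 + m * r) * n := by ring
    _ ≤ (r * r + 2 * m * r * r) * n := by
      gcongr ?_ * _
      have : m * r ≤ m * r * r := le_mul_of_one_le_right (by positivity) hr
      nlinarith
    _ ≤ ((1 + m) * r) ^ 2 * n := by
      gcongr
      nlinarith [sq_nonneg (m * r)]

lemma abs_normalizedDowling_mul_sqrt_sub_one_le (hm : 0 < m) (hc : 0 ≤ c) (hr : 1 ≤ r)
    (hn : r * (exp (m * r) + c) = n) :
    |normalizedDowling m c r n * √(saddleCurvature m r n / (2 * π)) - 1| ≤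
      (1 + 3 * m + m ^ 2) * (1 / saddleDecayRate m c ^ 2 +
        2 * (Nat.factorial 4 / m ^ 4) / saddleDecayRate m c ^ 3) * (1 + m) * (r ^ 3 / √n) := by
  have hn0 : (0 : ℝ) < n := by linarith [one_le_of_mul_exp_add_eq hm.le hc hr hn]
  have hκ := saddleDecayRate_pos hm hc
  have hB : 0 < saddleCurvature m r n := by
    unfold saddleCurvature
    positivity
  have hr4 : r ^ 4 / n ≤ Nat.factorial 4 / m ^ 4 := by
    rw [div_le_iff₀ hn0]
    exact pow_le_of_mul_exp_add_eq hm hc hr hn 4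
  have hinv : √(π / (saddleCurvature m r n / 2)) * √(saddleCurvature m r n / (2 * π)) = 1 := by
    rw [← sqrt_mul (by positivity), sqrt_eq_one]
    field_simp
  have hfactor : normalizedDowling m c r n * √(saddleCurvature m r n / (2 * π)) - 1 =
      (normalizedDowling m c r n - √(π / (saddleCurvature m r n / 2))) *
        √(saddleCurvature m r n / (2 * π)) := by
    rw [sub_mul, hinv]
  rw [hfactor, abs_mul, abs_of_nonneg (sqrt_nonneg (_ / (2 * π)))]
  grw [abs_normalizedDowling_sub_le hm hc hr hn, integral_saddleMajorant hm hc (by linarith) hn0,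
    sqrt_saddleCurvature_div_le hm.le hc hr hn, hr4]
  have hsqrt : √(n : ℝ) ^ 2 = n := sq_sqrt hn0.le
  refine le_of_eq ?_
  field_simp
  rw [hsqrt]

lemma abs_mul_log_one_add_div_exp_sub_le (hm : 0 ≤ m) (hc : 0 ≤ c) (hr : 0 < r)
    (hn : r * (exp (m * r) + c) = n) :
    |n * log (1 + c / exp (m * r)) - c * r| ≤ c ^ 2 * (1 + c) * (r ^ 2 / n) := by
  have hexp : 1 ≤ exp (m * r) := one_le_exp (by positivity)
  have hn0 : (0 : ℝ) < n := by
    rw [← hn]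
    positivity
  set u := c / exp (m * r) with hu
  have hu0 : 0 ≤ u := by positivity
  have hru : n * u = (1 + u) * (c * r) := by
    rw [← hn, hu]
    field_simp
  have hlower : c * r ≤ n * log (1 + u) := by
    calc c * r = n * (1 - (1 + u)⁻¹) := by
          field_simp
          linarith
      _ ≤ n * log (1 + u) := by
          gcongr
          exact one_sub_inv_le_log_of_pos (by positivity)
  have hupper : n * log (1 + u) ≤ n * u := by
    gcongr
    linarith [log_le_sub_one_of_pos (show 0 < 1 + u by positivity)]
  have hule : u ≤ c * (1 + c) * r / n := by
    rw [hu, div_le_div_iff₀ (by positivity) hn0, ← hn]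
    have : r * (exp (m * r) + c) ≤ r * (exp (m * r) + c * exp (m * r)) := by
      gcongr
      exact le_mul_of_one_le_right hc hexp
    calc c * (r * (exp (m * r) + c)) ≤ c * (r * (exp (m * r) + c * exp (m * r))) := by gcongr
      _ = c * (1 + c) * r * exp (m * r) := by ring
  rw [abs_of_nonneg (sub_nonneg.mpr hlower)]
  calc n * log (1 + u) - c * r ≤ u * (c * r) := by linarith
    _ ≤ c * (1 + c) * r / n * (c * r) := by gcongr
    _ = c ^ 2 * (1 + c) * (r ^ 2 / n) := by ring

lemma abs_sqrt_mul_div_saddleCurvature_sub_one_le (hm : 0 ≤ m) (hc : 0 ≤ c) (hr : 0 < r)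
    (hn : r * (exp (m * r) + c) = n) :
    |√(n * (m * r + 1) / saddleCurvature m r n) - 1| ≤ m * c * (r ^ 2 / n) := by
  have hn0 : (0 : ℝ) < n := by
    rw [← hn]
    positivity
  have hB : (n : ℝ) ≤ saddleCurvature m r n :=
    le_add_of_nonneg_right (by positivity)
  have hB0 : 0 < saddleCurvature m r n := hn0.trans_le hB
  have hratio : n * (m * r + 1) / saddleCurvature m r n =
      1 + m * c * (r ^ 2 / saddleCurvature m r n) := by
    field_simp
    rw [saddleCurvature]
    linear_combination -(m * r) * hn
  have hε : 0 ≤ m * c * (r ^ 2 / saddleCurvature m r n) := by positivity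
  have hlower : 1 ≤ √(1 + m * c * (r ^ 2 / saddleCurvature m r n)) :=
    one_le_sqrt.mpr (le_add_of_nonneg_right hε)
  have hupper := sqrt_le_self_iff.mpr (.inr (le_add_of_nonneg_right (a := 1) hε))
  rw [hratio, abs_of_nonneg (sub_nonneg.mpr hlower)]
  calc _ ≤ m * c * (r ^ 2 / saddleCurvature m r n) := by linarith
    _ ≤ m * c * (r ^ 2 / n) := by gcongr

lemma exp_mul_log_one_add_div_exp_sub (hr : 0 < r) (hc : 0 ≤ c)
    (hn : r * (exp (m * r) + c) = n) :
    exp (n * log (1 + c / exp (m * r)) - c * r) =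
      n ^ n / ((r * exp (m * r)) ^ n * exp (c * r)) := by
  have hbase : 1 + c / exp (m * r) = n / (r * exp (m * r)) := by
    rw [← hn]
    field_simp
  rw [exp_sub, exp_nat_mul, exp_log (by positivity), hbase, div_pow, div_div]

lemma exp_dowling_exponent_eq (hm : m ≠ 0) (hr : r ≠ 0) (hn : r * (exp (m * r) + c) = n) :
    exp (m * n * r - n + n / (m * r) + 2 * c * r - (1 + c) / m) =
      exp (m * r) ^ n * exp (c * r + (exp (m * r) - 1) / m) * exp (c * r) / exp n := by
  have hdiv : n / (m * r) = (exp (m * r) + c) / m := by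
    rw [← hn]
    field_simp
  rw [← exp_nat_mul, ← exp_add, ← exp_add, ← exp_sub, hdiv]
  congr 1
  ring

lemma dowlingNumber_div_eq (hm : 0 < m) (hc : 0 ≤ c) (hr : 0 < r)
    (hn : r * (exp (m * r) + c) = n) :
    dowlingNumber m c n / (1 / √(m * r + 1) *
        exp (m * n * r - n + n / (m * r) + 2 * c * r - (1 + c) / m)) =
      Stirling.stirlingSeq n / √π *
        (normalizedDowling m c r n * √(saddleCurvature m r n / (2 * π))) *
        exp (n * log (1 + c / exp (m * r)) - c * r) *
        √(n * (m * r + 1) / saddleCurvature m r n) := by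
  have hn0 : (0 : ℝ) < n := by
    rw [← hn]
    positivity
  have hB : 0 < saddleCurvature m r n := by
    unfold saddleCurvature
    positivity
  have hsqrt : √(saddleCurvature m r n / (2 * π)) * √(n * (m * r + 1) / saddleCurvature m r n) =
      √(m * r + 1) * √(2 * n) * √π / (2 * π) := by
    rw [← sqrt_mul (by positivity), ← sqrt_mul (by positivity), ← sqrt_mul (by positivity),
      ← sqrt_sq (show 0 ≤ 2 * π by positivity), ← sqrt_div (by positivity),
      sqrt_sq (show 0 ≤ 2 * π by positivity)]
    congr 1
    field_simp
  calc _ = Stirling.stirlingSeq n / √π * normalizedDowling m c r n *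
        exp (n * log (1 + c / exp (m * r)) - c * r) *
        (√(m * r + 1) * √(2 * n) * √π / (2 * π)) := by
        rw [exp_mul_log_one_add_div_exp_sub hr hc hn, exp_dowling_exponent_eq hm.ne' hr.ne' hn,
          Stirling.stirlingSeq, normalizedDowling, div_pow, exp_one_pow, mul_pow r]
        field_simp
    _ = _ := by
        rw [← hsqrt]
        ring

end Pointwise

variable {m c : ℝ} {r : ℕ → ℝ}

lemma eventually_one_le_of_mul_exp_add_eq (hm : 0 ≤ m) (hc : 0 ≤ c)
    (hr : ∀ᶠ n : ℕ in atTop, 0 < r n ∧ r n * (exp (m * r n) + c) = n) :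
    ∀ᶠ n : ℕ in atTop, 1 ≤ r n ∧ r n * (exp (m * r n) + c) = n := by
  filter_upwards [hr, tendsto_natCast_atTop_atTop.eventually_ge_atTop (exp m + c)]
    with n ⟨hr0, hn⟩ hlarge
  refine ⟨?_, hn⟩
  by_contra! hlt
  have hexp : exp (m * r n) ≤ exp m := exp_le_exp.mpr (mul_le_of_le_one_right hm hlt.le)
  have hpos : 0 < exp m + c := by positivity
  have : r n * (exp (m * r n) + c) < exp m + c :=
    (mul_le_mul_of_nonneg_left (by gcongr) hr0.le).trans_lt (mul_lt_of_lt_one_left hpos hlt)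
  linarith

lemma isBigO_pow_three_div_sqrt (hm : 0 < m) (hc : 0 ≤ c)
    (hr : ∀ᶠ n : ℕ in atTop, 1 ≤ r n ∧ r n * (exp (m * r n) + c) = n) :
    (fun n : ℕ ↦ r n ^ 3 / √n) =O[atTop] fun n : ℕ ↦ log n ^ 3 / √n := by
  refine IsBigO.of_bound (1 / m ^ 3) ?_
  filter_upwards [hr] with n ⟨hr1, hn⟩
  have hlog : m * r n ≤ log n := by
    rw [← log_exp (m * r n)]
    exact log_le_log (exp_pos _) (exp_mul_le_of_mul_exp_add_eq hc hr1 hn)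
  rw [norm_of_nonneg (by positivity), norm_of_nonneg (by positivity)]
  calc r n ^ 3 / √n = 1 / m ^ 3 * ((m * r n) ^ 3 / √n) := by field_simp
    _ ≤ 1 / m ^ 3 * (log n ^ 3 / √n) := by gcongr

lemma isBigO_sq_div (hm : 0 < m) (hc : 0 ≤ c)
    (hr : ∀ᶠ n : ℕ in atTop, 1 ≤ r n ∧ r n * (exp (m * r n) + c) = n) :
    (fun n : ℕ ↦ r n ^ 2 / n) =O[atTop] fun n : ℕ ↦ log n ^ 3 / √n := by
  refine .trans (IsBigO.of_bound 1 ?_) (isBigO_pow_three_div_sqrt hm hc hr)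
  filter_upwards [hr] with n ⟨hr1, hn⟩
  have hn1 := one_le_of_mul_exp_add_eq hm.le hc hr1 hn
  rw [norm_of_nonneg (by positivity), norm_of_nonneg (by positivity), one_mul]
  gcongr ?_ / ?_
  · exact pow_le_pow_right₀ hr1 (by norm_num)
  · exact sqrt_le_self_iff.mpr (.inr hn1)

theorem stmt_10_general (m c : ℝ) (hm : 0 < m) (hc : 0 ≤ c) (r : ℕ → ℝ)
    (hr : ∀ᶠ n : ℕ in atTop, 0 < r n ∧ r n * (exp (m * r n) + c) = n) :
    (fun n : ℕ ↦ dowlingNumber m c n / (1 / √(m * r n + 1) *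
        exp (m * n * r n - n + n / (m * r n) + 2 * c * r n - (1 + c) / m)) - 1)
      =O[atTop] fun n : ℕ ↦ log n ^ 3 / √n := by
  have hr1 := eventually_one_le_of_mul_exp_add_eq hm.le hc hr
  have hone : (fun n : ℕ ↦ log n ^ 3 / √n) =O[atTop] fun _ ↦ (1 : ℝ) :=
    (tendsto_log_pow_div_sqrt_atTop 3).isBigO_one ℝ
  have hsq := isBigO_sq_div hm hc hr1
  have hstirling : (fun n : ℕ ↦ Stirling.stirlingSeq n / √π - 1) =O[atTop]
      fun n : ℕ ↦ log n ^ 3 / √n :=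
    isBigO_stirlingSeq_div_sqrt_pi_sub_one.trans isBigO_one_div_log_pow_three_div_sqrt
  have hdowling : (fun n : ℕ ↦ normalizedDowling m c (r n) n *
      √(saddleCurvature m (r n) n / (2 * π)) - 1) =O[atTop] fun n : ℕ ↦ log n ^ 3 / √n :=
    (IsBigO.of_norm_eventuallyLE (hr1.mono fun n h ↦
      abs_normalizedDowling_mul_sqrt_sub_one_le hm hc h.1 h.2)).trans
      ((isBigO_pow_three_div_sqrt hm hc hr1).const_mul_left _)
  have hexp : (fun n : ℕ ↦ exp (n * log (1 + c / exp (m * r n)) - c * r n) - 1) =O[atTop]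
      fun n : ℕ ↦ log n ^ 3 / √n :=
    isBigO_exp_sub_one ((IsBigO.of_norm_eventuallyLE (hr.mono fun n h ↦
      abs_mul_log_one_add_div_exp_sub_le hm.le hc h.1 h.2)).trans (hsq.const_mul_left _))
      (tendsto_log_pow_div_sqrt_atTop 3)
  have hsqrt : (fun n : ℕ ↦ √(n * (m * r n + 1) / saddleCurvature m (r n) n) - 1) =O[atTop]
      fun n : ℕ ↦ log n ^ 3 / √n :=
    (IsBigO.of_norm_eventuallyLE (hr.mono fun n h ↦
      abs_sqrt_mul_div_saddleCurvature_sub_one_le hm.le hc h.1 h.2)).trans (hsq.const_mul_left _)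
  refine (isBigO_mul_sub_one hone (isBigO_mul_sub_one hone
    (isBigO_mul_sub_one hone hstirling hdowling) hexp) hsqrt).congr' ?_ .rfl
  filter_upwards [hr] with n ⟨hrn, hn⟩
  rw [dowlingNumber_div_eq hm hc hrn hn]

end Asymptotics

/-- If `r n` is the unique positive solution of `r·(e^{m·r} + c) = n`, then
`T_n = (m·r+1)^{-1/2}·exp(m·n·r − n + n/(m·r) + 2·c·r − (1+c)/m)
  ·(1 + O(n^{-1/2}·log^{7/2} n))` as `n → ∞`. -/
theorem stmt_10 (m c : ℕ) (hm : 0 < m) (hc : 0 < c) (r : ℕ → ℝ)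
    (hr : ∀ n : ℕ, 2 ≤ n → 0 < r n ∧ r n * (Real.exp (m * r n) + c) = n) :
    (fun n : ℕ =>
        (Ttot m c n : ℝ) /
            ((1 / Real.sqrt (m * r n + 1)) *
              Real.exp (m * n * r n - n + n / (m * r n) + 2 * c * r n - (1 + c) / m)) - 1)
      =O[atTop]
      (fun n : ℕ => (Real.log n) ^ ((7 : ℝ) / 2) / Real.sqrt n) := by
  simpa only [cast_Ttot] using (stmt_10_general m c (by exact_mod_cast hm) c.cast_nonneg r
    ((eventually_ge_atTop 2).mono hr)).trans isBigO_log_pow_three_div_sqrt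
end

section
/- Let f(x) = x·(e^{m·x} + c), and for each i ∈ {0,1,2} let t_i = t_i(n) be the unique positive real number with f(t_i) = n + i. Then as n → ∞, t_1 − t_0 = 1/(m·n) − 1/(m²·n·t_0) + O(1/(n·log² n)). -/
open Filter

/-!
Put `f(x) = x (e^{m x} + c)` and `d = s - t`. As `e^{m x}` is increasing,
`|d| (e^{m t} + c) ≤ |f(s) - f(t)|`, so a bounded increment of `f` forces `d = O(t / f(t))`.
Taylor's formula at `t` has remainder `O(f(t) d²)`, and `f'` has the order of `f`, whence
`d = (f(s) - f(t)) / f'(t) + O(t² / f(t)²)`. From `x f'(x) = f(x) (1 + m x) - c m x²` one reads off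
`1 / f'(x) = 1 / (m f(x)) - 1 / (m² x f(x)) + O(1 / (x² f(x)))`. All errors are
`O(1 / (t² f(t)))` because powers of `t` are negligible against `f(t)`, and `log f(t) = O(t)`.
-/

open Asymptotics
open scoped Topology

/-- The function `f(x) = x (e^{m x} + c)` whose level points `f(t_i) = n + i` are compared. It is
taken on all of `ℝ`, with real parameters `m` and `c`. -/
noncomputable def mulExpAdd (m c x : ℝ) : ℝ := x * (Real.exp (m * x) + c)

namespace mulExpAdd

variable {ι : Type*} {l : Filter ι} {m c : ℝ} {s t : ι → ℝ}

lemma deriv_eq (m c x : ℝ) :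
    deriv (mulExpAdd m c) x = Real.exp (m * x) * (1 + m * x) + c := by
  have hexp : HasDerivAt (fun z => Real.exp (m * z)) (Real.exp (m * x) * m) x := by
    simpa using ((hasDerivAt_id x).const_mul m).exp
  refine ((hasDerivAt_id x).mul (hexp.add_const c)).deriv.trans ?_
  simp only [id]
  ring

lemma mul_deriv_eq (m c x : ℝ) :
    x * deriv (mulExpAdd m c) x = mulExpAdd m c x * (1 + m * x) - c * m * x ^ 2 := by
  rw [deriv_eq, mulExpAdd]
  ring

lemma isEquivalent_mul_exp (hm : 0 < m) (c : ℝ) :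
    mulExpAdd m c ~[atTop] fun x => x * Real.exp (m * x) := by
  have hconst : (fun _ : ℝ => c) =o[atTop] fun x => Real.exp (m * x) := by
    simpa using (isLittleO_pow_exp_pos_mul_atTop (k := 0) hm).const_mul_left c
  refine ((isBigO_refl (fun x : ℝ => x) atTop).mul_isLittleO hconst).congr_left fun x => ?_
  simp only [mulExpAdd, Pi.sub_apply]
  ring

lemma isLittleO_exp (hm : 0 < m) (c : ℝ) :
    (fun x => Real.exp (m * x)) =o[atTop] mulExpAdd m c := by
  refine IsLittleO.trans_isBigO ?_ (isEquivalent_mul_exp hm c).isBigO_symm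
  have hone : (fun _ : ℝ => (1 : ℝ)) =o[atTop] fun x : ℝ => x :=
    (isLittleO_one_left_iff ℝ).2 tendsto_abs_atTop_atTop
  simpa using hone.mul_isBigO (isBigO_refl (fun x => Real.exp (m * x)) atTop)

lemma isLittleO_pow (hm : 0 < m) (c : ℝ) (k : ℕ) :
    (fun x => x ^ k) =o[atTop] mulExpAdd m c :=
  (isLittleO_pow_exp_pos_mul_atTop k hm).trans (isLittleO_exp hm c)

lemma deriv_isEquivalent (hm : 0 < m) (c : ℝ) :
    deriv (mulExpAdd m c) ~[atTop] fun x => m * mulExpAdd m c x := by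
  have hrest : (fun x => Real.exp (m * x) + (c * x ^ 0 - c * m * x ^ 1))
      =o[atTop] mulExpAdd m c :=
    (isLittleO_exp hm c).add <|
      ((isLittleO_pow hm c 0).const_mul_left c).sub ((isLittleO_pow hm c 1).const_mul_left (c * m))
  refine (hrest.const_mul_right hm.ne').congr_left fun x => ?_
  rw [Pi.sub_apply, deriv_eq, mulExpAdd]
  ring

lemma deriv_isTheta (hm : 0 < m) (c : ℝ) :
    deriv (mulExpAdd m c) =Θ[atTop] mulExpAdd m c :=
  (deriv_isEquivalent hm c).isTheta.trans ((isTheta_refl _ _).const_mul_left hm.ne')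

protected lemma tendsto_atTop (hm : 0 < m) (c : ℝ) : Tendsto (mulExpAdd m c) atTop atTop := by
  have hexp : Tendsto (fun x => Real.exp (m * x)) atTop atTop :=
    Real.tendsto_exp_atTop.comp (tendsto_id.const_mul_atTop hm)
  exact (isEquivalent_mul_exp hm c).tendsto_atTop_iff.2 (tendsto_id.atTop_mul_atTop₀ hexp)

lemma eventually_pos (hm : 0 < m) (c : ℝ) : ∀ᶠ x in atTop, 0 < mulExpAdd m c x :=
  (mulExpAdd.tendsto_atTop hm c).eventually_gt_atTop 0

lemma eventually_deriv_ne_zero (hm : 0 < m) (c : ℝ) :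
    ∀ᶠ x in atTop, deriv (mulExpAdd m c) x ≠ 0 := by
  filter_upwards [(deriv_isTheta hm c).isBigO_symm.eq_zero_imp, eventually_pos hm c]
    with x hzero hpos using mt hzero hpos.ne'

lemma inv_deriv_sub_isBigO (hm : 0 < m) (c : ℝ) :
    (fun x => (deriv (mulExpAdd m c) x)⁻¹
        - (1 / (m * mulExpAdd m c x) - 1 / (m ^ 2 * mulExpAdd m c x * x)))
      =O[atTop] fun x => 1 / (mulExpAdd m c x * x ^ 2) := by
  have hnum : (fun x => mulExpAdd m c x + (c * m ^ 2 * x ^ 3 - c * m * x ^ 2))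
      =O[atTop] mulExpAdd m c :=
    (isBigO_refl _ _).add <| (((isLittleO_pow hm c 3).const_mul_left _).sub
      ((isLittleO_pow hm c 2).const_mul_left _)).isBigO
  have hden : (fun x => (deriv (mulExpAdd m c) x)⁻¹ * (m ^ 2 * mulExpAdd m c x * x ^ 2)⁻¹)
      =O[atTop] fun x => (mulExpAdd m c x)⁻¹ * (mulExpAdd m c x * x ^ 2)⁻¹ := by
    refine (deriv_isTheta hm c).inv.isBigO.mul ?_
    simpa only [mul_assoc, mul_inv (m ^ 2)] using
      (isBigO_refl (fun x => (mulExpAdd m c x * x ^ 2)⁻¹) atTop).const_mul_left (m ^ 2)⁻¹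
  refine (hnum.mul hden).congr' ?_ ?_
  · filter_upwards [eventually_gt_atTop 0, eventually_pos hm c, eventually_deriv_ne_zero hm c]
      with x hx hpos hderiv
    have hmul := mul_deriv_eq m c x
    field_simp
    linear_combination (m * x - 1) * hmul
  · filter_upwards [eventually_gt_atTop 0, eventually_pos hm c] with x hx hpos
    field_simp

lemma abs_sub_mul_exp_add_le {x z : ℝ} (hm : 0 ≤ m) (c : ℝ) (hz : 0 ≤ z) :
    |z - x| * (Real.exp (m * x) + c) ≤ |mulExpAdd m c z - mulExpAdd m c x| := by
  have hsplit : mulExpAdd m c z - mulExpAdd m c x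
      = (z - x) * (Real.exp (m * x) + c) + z * (Real.exp (m * z) - Real.exp (m * x)) := by
    rw [mulExpAdd, mulExpAdd]
    ring
  -- The second summand has the sign of `z - x`.
  rcases le_total x z with hxz | hzx
  · have hexp : Real.exp (m * x) ≤ Real.exp (m * z) := by gcongr
    rw [abs_of_nonneg (sub_nonneg.2 hxz)]
    refine le_trans ?_ (le_abs_self _)
    linarith [mul_nonneg hz (sub_nonneg.2 hexp)]
  · have hexp : Real.exp (m * z) ≤ Real.exp (m * x) := by gcongr
    rw [abs_of_nonpos (sub_nonpos.2 hzx)]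
    refine le_trans ?_ (neg_le_abs _)
    linarith [mul_nonneg hz (sub_nonneg.2 hexp)]

lemma abs_sub_sub_deriv_mul_le {x z : ℝ} (c : ℝ) (hxz : |m * (z - x)| ≤ 1) :
    |mulExpAdd m c z - mulExpAdd m c x - deriv (mulExpAdd m c) x * (z - x)|
      ≤ Real.exp (m * x) * (m ^ 2 * |x| + 2 * |m|) * (z - x) ^ 2 := by
  have hexp : Real.exp (m * z) = Real.exp (m * x) * Real.exp (m * (z - x)) := by
    rw [← Real.exp_add]
    ring_nf
  have hfirst := Real.abs_exp_sub_one_le hxz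
  have hsecond := Real.abs_exp_sub_one_sub_id_le hxz
  set d := z - x with hd
  have hremainder : mulExpAdd m c z - mulExpAdd m c x - deriv (mulExpAdd m c) x * d
      = Real.exp (m * x) * (x * (Real.exp (m * d) - 1 - m * d) + d * (Real.exp (m * d) - 1)) := by
    rw [deriv_eq, mulExpAdd, mulExpAdd, hexp, hd]
    ring
  calc |mulExpAdd m c z - mulExpAdd m c x - deriv (mulExpAdd m c) x * d|
    _ = Real.exp (m * x) *
          |x * (Real.exp (m * d) - 1 - m * d) + d * (Real.exp (m * d) - 1)| := by
      rw [hremainder, abs_mul, abs_of_pos (Real.exp_pos _)]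
    _ ≤ Real.exp (m * x) * (|x| * |Real.exp (m * d) - 1 - m * d|
          + |d| * |Real.exp (m * d) - 1|) := by
      rw [← abs_mul, ← abs_mul]
      gcongr
      exact abs_add_le _ _
    _ ≤ Real.exp (m * x) * (|x| * (m * d) ^ 2 + |d| * (2 * |m * d|)) := by gcongr
    _ = Real.exp (m * x) * (m ^ 2 * |x| + 2 * |m|) * d ^ 2 := by
      rw [abs_mul, ← sq_abs d, mul_pow, ← sq_abs d]
      ring

lemma log_le {x : ℝ} (hm : 0 ≤ m) (hx : 0 ≤ x) (hpos : 0 < mulExpAdd m c x) :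
    Real.log (mulExpAdd m c x) ≤ (m + 1) * x + Real.log (1 + |c|) := by
  have hfactor : Real.exp (m * x) + c ≤ Real.exp (m * x) * (1 + |c|) := by
    nlinarith [le_abs_self c, abs_nonneg c, Real.one_le_exp (mul_nonneg hm hx)]
  have hbound : mulExpAdd m c x ≤ Real.exp ((m + 1) * x) * (1 + |c|) :=
    calc x * (Real.exp (m * x) + c)
      _ ≤ x * (Real.exp (m * x) * (1 + |c|)) := by gcongr
      _ ≤ Real.exp x * (Real.exp (m * x) * (1 + |c|)) := by
        gcongr
        linarith [Real.add_one_le_exp x]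
      _ = Real.exp ((m + 1) * x) * (1 + |c|) := by rw [add_one_mul, Real.exp_add]; ring
  calc Real.log (mulExpAdd m c x)
    _ ≤ Real.log (Real.exp ((m + 1) * x) * (1 + |c|)) := Real.log_le_log hpos hbound
    _ = (m + 1) * x + Real.log (1 + |c|) := by
      rw [Real.log_mul (by positivity) (by positivity), Real.log_exp]

lemma tendsto_atTop_of_comp (hm : 0 ≤ m) (ht : ∀ᶠ i in l, 0 ≤ t i)
    (hft : Tendsto (fun i => mulExpAdd m c (t i)) l atTop) : Tendsto t l atTop := by
  have hlin : Tendsto (fun i => (m + 1) * t i + Real.log (1 + |c|)) l atTop := by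
    refine tendsto_atTop_mono' l ?_ (Real.tendsto_log_atTop.comp hft)
    filter_upwards [ht, hft.eventually_gt_atTop 0] with i hti hpos using log_le hm hti hpos
  have hmul := tendsto_atTop_add_const_right l (-Real.log (1 + |c|)) hlin
  simp only [add_neg_cancel_right] at hmul
  exact (tendsto_const_mul_atTop_of_pos (by positivity)).1 hmul

lemma log_isBigO (hm : 0 < m) (c : ℝ) :
    (fun x => Real.log (mulExpAdd m c x)) =O[atTop] fun x => x := by
  have hle : (fun x => Real.log (mulExpAdd m c x))
      =O[atTop] fun x => (m + 1) * x + Real.log (1 + |c|) := by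
    refine IsBigO.of_norm_eventuallyLE ?_
    filter_upwards [eventually_ge_atTop 0, (mulExpAdd.tendsto_atTop hm c).eventually_ge_atTop 1]
      with x hx hone
    rw [Real.norm_of_nonneg (Real.log_nonneg hone)]
    exact log_le hm.le hx (one_pos.trans_le hone)
  exact hle.trans (((isBigO_refl _ _).const_mul_left _).add
    (isLittleO_const_id_atTop _).isBigO)

lemma sub_isBigO (hm : 0 < m) (ht : Tendsto t l atTop) (hs : ∀ᶠ i in l, 0 ≤ s i)
    (hbdd : (fun i => mulExpAdd m c (s i) - mulExpAdd m c (t i)) =O[l] fun _ => (1 : ℝ)) :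
    (fun i => s i - t i) =O[l] fun i => t i / mulExpAdd m c (t i) := by
  have hle : (fun i => s i - t i) =O[l] fun i =>
      (mulExpAdd m c (s i) - mulExpAdd m c (t i)) * (t i / mulExpAdd m c (t i)) := by
    refine IsBigO.of_bound' ?_
    filter_upwards [hs, ht.eventually_gt_atTop 0, ht.eventually (eventually_pos hm c)]
      with i hsi hti hpos
    rw [norm_mul, Real.norm_of_nonneg (div_pos hti hpos).le, mul_div_assoc', le_div_iff₀ hpos]
    calc |s i - t i| * (t i * (Real.exp (m * t i) + c))
      _ = |s i - t i| * (Real.exp (m * t i) + c) * t i := by ring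
      _ ≤ |mulExpAdd m c (s i) - mulExpAdd m c (t i)| * t i := by
        gcongr
        exact abs_sub_mul_exp_add_le hm.le c hsi
  simpa only [one_mul] using hle.trans (hbdd.mul (isBigO_refl _ l))

lemma sub_sub_deriv_mul_isBigO (hm : 0 < m) (ht : Tendsto t l atTop)
    (hst : Tendsto (fun i => s i - t i) l (𝓝 0)) :
    (fun i => mulExpAdd m c (s i) - mulExpAdd m c (t i)
        - deriv (mulExpAdd m c) (t i) * (s i - t i))
      =O[l] fun i => mulExpAdd m c (t i) * (s i - t i) ^ 2 := by
  have hcoeff : (fun x => Real.exp (m * x) * (m ^ 2 * |x| + 2 * |m|))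
      =O[atTop] mulExpAdd m c := by
    have hlin : (fun x : ℝ => m ^ 2 * |x| + 2 * |m|) =O[atTop] fun x => x :=
      ((isBigO_refl _ _).abs_left.const_mul_left _).add (isLittleO_const_id_atTop _).isBigO
    refine IsBigO.trans ?_ (isEquivalent_mul_exp hm c).isBigO_symm
    simpa only [mul_comm] using (isBigO_refl (fun x => Real.exp (m * x)) atTop).mul hlin
  refine IsBigO.trans (.of_norm_eventuallyLE ?_) ((hcoeff.comp_tendsto ht).mul (isBigO_refl _ l))
  have hsmall : Tendsto (fun i => |m * (s i - t i)|) l (𝓝 0) := by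
    simpa using (hst.const_mul m).abs
  filter_upwards [hsmall.eventually_le_const one_pos] with i hi using abs_sub_sub_deriv_mul_le c hi

lemma sub_sub_mul_inv_deriv_isBigO (hm : 0 < m) (ht : Tendsto t l atTop) (hs : ∀ᶠ i in l, 0 ≤ s i)
    (hbdd : (fun i => mulExpAdd m c (s i) - mulExpAdd m c (t i)) =O[l] fun _ => (1 : ℝ)) :
    (fun i => s i - t i
        - (mulExpAdd m c (s i) - mulExpAdd m c (t i)) * (deriv (mulExpAdd m c) (t i))⁻¹)
      =O[l] fun i => 1 / (mulExpAdd m c (t i) * t i ^ 2) := by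
  have hsub : (fun i => s i - t i) =O[l] fun i => t i / mulExpAdd m c (t i) :=
    sub_isBigO hm ht hs hbdd
  have hlim : Tendsto (fun x => x / mulExpAdd m c x) atTop (𝓝 0) := by
    simpa using (isLittleO_pow hm c 1).tendsto_div_nhds_zero
  have hsub_zero : Tendsto (fun i => s i - t i) l (𝓝 0) := hsub.trans_tendsto (hlim.comp ht)
  have htaylor : (fun i => mulExpAdd m c (s i) - mulExpAdd m c (t i)
        - deriv (mulExpAdd m c) (t i) * (s i - t i))
      =O[l] fun i => mulExpAdd m c (t i) * (t i / mulExpAdd m c (t i)) ^ 2 :=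
    (sub_sub_deriv_mul_isBigO hm ht hsub_zero).trans ((isBigO_refl _ l).mul (hsub.pow 2))
  have hquot := htaylor.neg_left.mul ((deriv_isTheta hm c).inv.isBigO.comp_tendsto ht)
  have hpow : (fun x => x ^ 4 / (mulExpAdd m c x ^ 2 * x ^ 2))
      =O[atTop] fun x => mulExpAdd m c x / (mulExpAdd m c x ^ 2 * x ^ 2) := by
    simpa only [div_eq_mul_inv] using (isLittleO_pow hm c 4).isBigO.mul (isBigO_refl _ _)
  refine (hquot.congr' ?_ ?_).trans ((hpow.comp_tendsto ht).congr' .rfl ?_)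
  · filter_upwards [ht.eventually (eventually_deriv_ne_zero hm c)] with i hderiv
    simp only [Function.comp_apply]
    field_simp
    ring
  · filter_upwards [ht.eventually_gt_atTop 0, ht.eventually (eventually_pos hm c)] with i hti hpos
    simp only [Function.comp_apply]
    field_simp
  · filter_upwards [ht.eventually_gt_atTop 0, ht.eventually (eventually_pos hm c)] with i hti hpos
    simp only [Function.comp_apply]
    field_simp

lemma sub_sub_expansion_isBigO (hm : 0 < m) (ht : Tendsto t l atTop) (hs : ∀ᶠ i in l, 0 ≤ s i)
    (hbdd : (fun i => mulExpAdd m c (s i) - mulExpAdd m c (t i)) =O[l] fun _ => (1 : ℝ)) :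
    (fun i => s i - t i - (mulExpAdd m c (s i) - mulExpAdd m c (t i))
        * (1 / (m * mulExpAdd m c (t i)) - 1 / (m ^ 2 * mulExpAdd m c (t i) * t i)))
      =O[l] fun i => 1 / (mulExpAdd m c (t i) * t i ^ 2) := by
  have hinv := hbdd.mul ((inv_deriv_sub_isBigO hm c).comp_tendsto ht)
  simp only [Function.comp_def, one_mul] at hinv
  refine ((sub_sub_mul_inv_deriv_isBigO hm ht hs hbdd).add hinv).congr_left fun i => ?_
  ring

lemma one_div_mul_sq_isBigO_log (hm : 0 < m) (c : ℝ) :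
    (fun x => 1 / (mulExpAdd m c x * x ^ 2))
      =O[atTop] fun x => 1 / (mulExpAdd m c x * Real.log (mulExpAdd m c x) ^ 2) := by
  have hlog : ∀ᶠ x in atTop, Real.log (mulExpAdd m c x) ≠ 0 :=
    (Real.tendsto_log_atTop.comp (mulExpAdd.tendsto_atTop hm c)).eventually_ne_atTop 0
  have hinv := (log_isBigO hm c).inv_rev (hlog.mono fun _ hne hzero => absurd hzero hne)
  simpa only [one_div, mul_inv, inv_pow] using (isBigO_refl _ _).mul (hinv.pow 2)

end mulExpAdd

theorem stmt_11_general {ι : Type*} {l : Filter ι} {m c h : ℝ} {y t s : ι → ℝ} (hm : 0 < m)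
    (hy : Tendsto y l atTop)
    (ht : ∀ᶠ i in l, 0 < t i ∧ t i * (Real.exp (m * t i) + c) = y i)
    (hs : ∀ᶠ i in l, 0 < s i ∧ s i * (Real.exp (m * s i) + c) = y i + h) :
    (fun i => s i - t i - h * (1 / (m * y i) - 1 / (m ^ 2 * y i * t i)))
      =O[l] fun i => 1 / (y i * Real.log (y i) ^ 2) := by
  have hft : (fun i => mulExpAdd m c (t i)) =ᶠ[l] y := ht.mono fun _ hi => hi.2
  have hstep : (fun i => mulExpAdd m c (s i) - mulExpAdd m c (t i)) =ᶠ[l] fun _ => h := by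
    filter_upwards [ht, hs] with i hti hsi
    rw [mulExpAdd, mulExpAdd, hti.2, hsi.2, add_sub_cancel_left]
  have htop : Tendsto t l atTop :=
    mulExpAdd.tendsto_atTop_of_comp hm.le (ht.mono fun _ hi => hi.1.le) (hy.congr' hft.symm)
  have hmain := (mulExpAdd.sub_sub_expansion_isBigO hm htop (hs.mono fun _ hi => hi.1.le)
    (hstep.trans_isBigO (isBigO_const_const h one_ne_zero l))).trans
    ((mulExpAdd.one_div_mul_sq_isBigO_log hm c).comp_tendsto htop)
  refine hmain.congr' ?_ ?_
  · filter_upwards [hft, hstep] with i hfi hstepi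
    rw [hstepi, hfi]
  · filter_upwards [hft] with i hfi
    rw [Function.comp_apply, hfi]

/-- If `t i` is the unique positive solution of `t·(e^{m·t} + c) = n + i`, then
`t_1 − t_0 = 1/(m·n) − 1/(m²·n·t_0) + O(1/(n·log² n))` as `n → ∞`. -/
theorem stmt_11 (m c : ℕ) (hm : 0 < m) (t0 t1 t2 : ℕ → ℝ)
    (ht0 : ∀ n : ℕ, 2 ≤ n → 0 < t0 n ∧ t0 n * (Real.exp (m * t0 n) + c) = n)
    (ht1 : ∀ n : ℕ, 2 ≤ n → 0 < t1 n ∧ t1 n * (Real.exp (m * t1 n) + c) = n + 1)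
    (ht2 : ∀ n : ℕ, 2 ≤ n → 0 < t2 n ∧ t2 n * (Real.exp (m * t2 n) + c) = n + 2) :
    (fun n : ℕ => t1 n - t0 n - (1 / (m * n) - 1 / ((m : ℝ) ^ 2 * n * t0 n)))
      =O[atTop] (fun n : ℕ => 1 / (n * (Real.log n) ^ 2)) := by
  simpa only [one_mul] using stmt_11_general (Nat.cast_pos.2 hm) tendsto_natCast_atTop_atTop
    (eventually_atTop.2 ⟨2, ht0⟩) (eventually_atTop.2 ⟨2, ht1⟩)
end
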